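/- Suppose K is closed at infinity, the degrees of f and of every c_j with j ∈ I are all even, and f ∈ ℝ + int(P_d(K)), i.e., f − c lies in the interior of P_d(K) for some c ∈ ℝ (in particular f_min is finite). If the LICQC, SCC and SOSC hold at every global minimizer of the problem (H⁰): minimize f̃(x̃) − f_min·x_0^d subject to c̃_j(x̃) = 0 (j∈E), ‖x̃‖² − 1 = 0, c̃_j(x̃) ≥ 0 (j∈I), then there exists k0 ∈ ℕ such that f_k^den = f_min for all k ≥ k0. -/

import Mathlib

open MvPolynomial MeasureTheory

noncomputable section

/-- The space of real polynomials in `n` variables. -/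
abbrev RPoly (n : ℕ) : Type := MvPolynomial (Fin n) ℝ

/-- The degree `|α|` of a monomial power `α`. -/
def mdeg {n : ℕ} (α : Fin n →₀ ℕ) : ℕ := ∑ i, α i

/-- `p` is a sum of squares of polynomials. -/
def IsSOS {n : ℕ} (p : RPoly n) : Prop :=
  ∃ L : List (RPoly n), p = (L.map (fun q => q ^ 2)).sum

/-- The truncation `QM(g)_k` of the quadratic module generated by `(g j)_{j ∈ S}`. -/
def QModDeg {n : ℕ} {κ : Type} (S : Finset κ) (g : κ → RPoly n) (k : ℕ) :
    Set (RPoly n) :=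
  {p | ∃ σ0 : RPoly n, ∃ σ : κ → RPoly n,
      IsSOS σ0 ∧ σ0.totalDegree ≤ k ∧
      (∀ j ∈ S, IsSOS (σ j) ∧ (σ j).totalDegree + (g j).totalDegree ≤ k) ∧
      p = σ0 + ∑ j ∈ S, g j * σ j}

/-- The truncation `Ideal(h)_k` of the ideal generated by `(h j)_{j ∈ S}`. -/
def IdealDeg {n : ℕ} {ι : Type} (S : Finset ι) (h : ι → RPoly n) (k : ℕ) :
    Set (RPoly n) :=
  {p | ∃ q : ι → RPoly n,
      (∀ j ∈ S, (q j).totalDegree + (h j).totalDegree ≤ k) ∧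
      p = ∑ j ∈ S, h j * q j}

/-- The quadratic module `QM(g)` generated by `(g j)_{j ∈ S}`. -/
def QModFull {n : ℕ} {κ : Type} (S : Finset κ) (g : κ → RPoly n) : Set (RPoly n) :=
  {p | ∃ σ0 : RPoly n, ∃ σ : κ → RPoly n,
      IsSOS σ0 ∧ (∀ j ∈ S, IsSOS (σ j)) ∧ p = σ0 + ∑ j ∈ S, g j * σ j}

/-- The ideal `Ideal(h)` generated by `(h j)_{j ∈ S}`. -/
def IdealFull {n : ℕ} {ι : Type} (S : Finset ι) (h : ι → RPoly n) : Set (RPoly n) :=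
  (Ideal.span (h '' (S : Set ι)) : Ideal (RPoly n))

/-- `Ideal(c_eq) + QM(c_in)` is archimedean. -/
def ArchimedeanQM {n : ℕ} (E I : Finset ℕ) (c : ℕ → RPoly n) : Prop :=
  ∃ R : ℝ, 0 < R ∧ ∃ p1 ∈ IdealFull E c, ∃ p2 ∈ QModFull I c,
    (C R : RPoly n) - ∑ i, (X i : RPoly n) ^ 2 = p1 + p2

/-- The basic closed semialgebraic set `K`. -/
def Kset {n : ℕ} (E I : Finset ℕ) (c : ℕ → RPoly n) : Set (Fin n → ℝ) :=
  {x | (∀ j ∈ E, eval x (c j) = 0) ∧ (∀ j ∈ I, 0 ≤ eval x (c j))}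

/-- The bilinear pairing `⟨p, y⟩ = ∑_α p_α y_α`. -/
def pairing {n : ℕ} (p : RPoly n) (y : (Fin n →₀ ℕ) → ℝ) : ℝ :=
  ∑ α ∈ p.support, p.coeff α * y α

/-- Membership in the moment cone `ℛ_d(K)`: the entries `y_α`, `|α| ≤ d`, are the
moments of a finite Borel measure supported in the closed set `K`. -/
def InMomentCone {n : ℕ} (d : ℕ) (K : Set (Fin n → ℝ)) (y : (Fin n →₀ ℕ) → ℝ) : Prop :=
  ∃ μ : Measure (Fin n → ℝ), IsFiniteMeasure μ ∧ μ Kᶜ = 0 ∧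
    ∀ α : Fin n →₀ ℕ, mdeg α ≤ d →
      Integrable (fun x => ∏ i, x i ^ α i) μ ∧
      y α = ∫ x, (∏ i, x i ^ α i) ∂μ

/-- The cone `P_d(K)` of polynomials of degree at most `d` that are nonnegative on `K`. -/
def PdCone {n : ℕ} (d : ℕ) (K : Set (Fin n → ℝ)) : Set (RPoly n) :=
  {p | p.totalDegree ≤ d ∧ ∀ x ∈ K, 0 ≤ eval x p}

/-- The interior of `P_d(K)` in the coefficient topology of `ℝ[x]_d`. -/
def PdInterior {n : ℕ} (d : ℕ) (K : Set (Fin n → ℝ)) : Set (RPoly n) :=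
  {p | p.totalDegree ≤ d ∧ ∃ ε : ℝ, 0 < ε ∧ ∀ q : RPoly n, q.totalDegree ≤ d →
      (∀ α : Fin n →₀ ℕ, |q.coeff α - p.coeff α| ≤ ε) → ∀ x ∈ K, 0 ≤ eval x q}

instance degLEFintype (n t : ℕ) : Fintype {α : Fin n →₀ ℕ // mdeg α ≤ t} := by
  apply Fintype.ofInjective
    (fun a : {α : Fin n →₀ ℕ // mdeg α ≤ t} =>
      (fun i => (⟨a.1 i, by
        have h1 : a.1 i ≤ mdeg a.1 :=
          Finset.single_le_sum (fun j _ => Nat.zero_le _) (Finset.mem_univ i)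
        exact Nat.lt_succ_of_le (le_trans h1 a.2)⟩ : Fin (t + 1))) :
        {α : Fin n →₀ ℕ // mdeg α ≤ t} → (Fin n → Fin (t + 1)))
  intro a b hab
  apply Subtype.ext
  ext i
  exact congrArg Fin.val (congrFun hab i)

/-- The moment matrix `M_t[w]`, indexed by monomial powers of degree at most `t`. -/
def momentMatrix {n : ℕ} (t : ℕ) (w : (Fin n →₀ ℕ) → ℝ) :
    Matrix {α : Fin n →₀ ℕ // mdeg α ≤ t} {α : Fin n →₀ ℕ // mdeg α ≤ t} ℝ :=
  fun α β => w (α.1 + β.1)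

/-- `w` admits a flat truncation: for some `d0 ≤ t ≤ k`,
`rank M_{t-dK}[w] = rank M_t[w]`. -/
def HasFlatTruncation {n : ℕ} (d0 dK k : ℕ) (w : (Fin n →₀ ℕ) → ℝ) : Prop :=
  ∃ t : ℕ, d0 ≤ t ∧ t ≤ k ∧
    (momentMatrix (t - dK) w).rank = (momentMatrix t w).rank

/-- The gradient of a polynomial at a point. -/
def gradP {n : ℕ} (p : RPoly n) (u : Fin n → ℝ) : Fin n → ℝ :=
  fun i => eval u (pderiv i p)

/-- The Hessian of a polynomial at a point. -/
def hessP {n : ℕ} (p : RPoly n) (u : Fin n → ℝ) : Fin n → Fin n → ℝ :=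
  fun i j => eval u (pderiv i (pderiv j p))

/-- The classical optimality conditions (LICQC, KKT with SCC and SOSC) at the point `u`
for the problem: minimize `F` subject to `ge j = 0` (`j ∈ Es`), `gi j ≥ 0` (`j ∈ Is`). -/
def OptCondsAt {n : ℕ} {ι κ : Type}
    (Es : Finset ι) (ge : ι → RPoly n) (Is : Finset κ) (gi : κ → RPoly n)
    (F : RPoly n) (u : Fin n → ℝ) : Prop :=
  -- LICQC: gradients of active constraints are linearly independent
  LinearIndependent ℝ
    (Sum.elim
      (fun j : {j : ι // j ∈ Es ∧ eval u (ge j) = 0} => gradP (ge j.1) u)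
      (fun j : {j : κ // j ∈ Is ∧ eval u (gi j) = 0} => gradP (gi j.1) u)) ∧
  ∃ (lamE : ι → ℝ) (lamI : κ → ℝ),
    -- KKT stationarity
    (gradP F u =
      (∑ j ∈ Es, lamE j • gradP (ge j) u) + ∑ j ∈ Is, lamI j • gradP (gi j) u) ∧
    (∀ j ∈ Is, 0 ≤ lamI j ∧ lamI j * eval u (gi j) = 0) ∧
    -- SCC
    (∀ j ∈ Is, 0 < lamI j + eval u (gi j)) ∧
    -- SOSC
    (∀ v : Fin n → ℝ, v ≠ 0 →
      (∀ j ∈ Es, (∑ i, v i * gradP (ge j) u i) = 0) →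
      (∀ j ∈ Is, eval u (gi j) = 0 → (∑ i, v i * gradP (gi j) u i) = 0) →
      0 < ∑ i, ∑ i', v i *
        ((hessP F u i i' - ∑ j ∈ Es, lamE j * hessP (ge j) u i i')
          - ∑ j ∈ Is, lamI j * hessP (gi j) u i i') * v i')

/-- The degree-`ℓ` homogenization `x_0^ℓ p(x/x_0)` of `p`; the new variable `x_0`
is the variable of index `0` in `Fin (n+1)`. -/
def homogAux {n : ℕ} (ℓ : ℕ) (p : RPoly n) : RPoly (n + 1) :=
  ∑ α ∈ p.support,
    monomial
      (Finsupp.single (0 : Fin (n + 1)) (ℓ - mdeg α) + Finsupp.mapDomain Fin.succ α)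
      (p.coeff α)

/-- The homogenization `p̃` of `p`. -/
def homogenize {n : ℕ} (p : RPoly n) : RPoly (n + 1) := homogAux p.totalDegree p

/-- The polynomial `‖x̃‖² - 1`. -/
def sphereP (n : ℕ) : RPoly (n + 1) := (∑ i, (X i : RPoly (n + 1)) ^ 2) - 1

/-- The homogenization `K̃` of the set `K`. -/
def Khom {n : ℕ} (E I : Finset ℕ) (c : ℕ → RPoly n) : Set (Fin (n + 1) → ℝ) :=
  {x | (∀ j ∈ E, eval x (homogenize (c j)) = 0) ∧
       (∀ j ∈ I, 0 ≤ eval x (homogenize (c j))) ∧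
       (∑ i, (x i) ^ 2) = 1 ∧ 0 ≤ x 0}

/-- `K` is closed at infinity. -/
def ClosedAtInfinity {n : ℕ} (E I : Finset ℕ) (c : ℕ → RPoly n) : Prop :=
  Khom E I c = closure (Khom E I c ∩ {x | 0 < x 0})

/-- The tuple `c̃_eq`: the homogenizations `c̃_j` together with `‖x̃‖² - 1`
(the latter indexed by `none`). -/
def gEqH {n : ℕ} (c : ℕ → RPoly n) : Option ℕ → RPoly (n + 1) :=
  fun o => o.elim (sphereP n) (fun j => homogenize (c j))

/-- The tuple `c̃_in`: the homogenizations `c̃_j` together with `x_0`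
(the latter indexed by `none`). -/
def gInH {n : ℕ} (c : ℕ → RPoly n) : Option ℕ → RPoly (n + 1) :=
  fun o => o.elim (X 0) (fun j => homogenize (c j))

/-- The index set of a tuple extended by one extra entry (indexed by `none`). -/
def OS (S : Finset ℕ) : Finset (Option ℕ) := insert none (S.image some)

/-- Feasibility of `θ` for the linear conic problem (P). -/
def PFeas {n m : ℕ} (m1 d : ℕ) (f : RPoly n) (a : Fin m → RPoly n)
    (K : Set (Fin n → ℝ)) (θ : Fin m → ℝ) : Prop :=
  (∀ i : Fin m, m1 ≤ (i : ℕ) → 0 ≤ θ i) ∧ (f - ∑ i, C (θ i) * a i) ∈ PdCone d K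

/-- The optimal value `ϑ*` of the linear conic problem (P). -/
def PVal {n m : ℕ} (m1 d : ℕ) (f : RPoly n) (a : Fin m → RPoly n) (b : Fin m → ℝ)
    (K : Set (Fin n → ℝ)) : ℝ :=
  sSup {v : ℝ | ∃ θ : Fin m → ℝ, PFeas m1 d f a K θ ∧ v = ∑ i, b i * θ i}

/-- Feasibility of `y` for the generalized moment problem (M). -/
def MFeas {n m : ℕ} (m1 d : ℕ) (a : Fin m → RPoly n) (b : Fin m → ℝ)
    (K : Set (Fin n → ℝ)) (y : (Fin n →₀ ℕ) → ℝ) : Prop :=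
  InMomentCone d K y ∧
  (∀ i : Fin m, (i : ℕ) < m1 → pairing (a i) y = b i) ∧
  (∀ i : Fin m, m1 ≤ (i : ℕ) → b i ≤ pairing (a i) y)

/-- The optimal value `φ*` of the generalized moment problem (M). -/
def MVal {n m : ℕ} (m1 d : ℕ) (f : RPoly n) (a : Fin m → RPoly n) (b : Fin m → ℝ)
    (K : Set (Fin n → ℝ)) : ℝ :=
  sInf {v : ℝ | ∃ y : (Fin n →₀ ℕ) → ℝ, MFeas m1 d a b K y ∧ v = pairing f y}

/-- The optimal value `ϑ_k` of the `k`th SOS relaxation of (P). -/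
def SOSRelaxVal {n m : ℕ} {ι κ : Type} (m1 : ℕ) (f : RPoly n) (a : Fin m → RPoly n)
    (b : Fin m → ℝ) (Es : Finset ι) (ge : ι → RPoly n) (Is : Finset κ) (gi : κ → RPoly n)
    (k : ℕ) : ℝ :=
  sSup {v : ℝ | ∃ θ : Fin m → ℝ, (∀ i : Fin m, m1 ≤ (i : ℕ) → 0 ≤ θ i) ∧
      (∃ p1 ∈ IdealDeg Es ge (2 * k), ∃ p2 ∈ QModDeg Is gi (2 * k),
        f - ∑ i, C (θ i) * a i = p1 + p2) ∧
      v = ∑ i, b i * θ i}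

/-- The semidefinite constraints of the `k`th moment relaxation:
the localizing vectors of the equality constraints vanish, and the localizing
matrices of the inequality constraints and the moment matrix are positive
semidefinite (stated equivalently via the associated quadratic forms). -/
def MomRelaxPSD {n : ℕ} {ι κ : Type} (Es : Finset ι) (ge : ι → RPoly n)
    (Is : Finset κ) (gi : κ → RPoly n) (k : ℕ) (w : (Fin n →₀ ℕ) → ℝ) : Prop :=
  (∀ j ∈ Es, ∀ p : RPoly n, p.totalDegree + (ge j).totalDegree ≤ 2 * k →
      pairing (ge j * p) w = 0) ∧
  (∀ j ∈ Is, ∀ p : RPoly n, p.totalDegree + ((gi j).totalDegree + 1) / 2 ≤ k →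
      0 ≤ pairing (gi j * p ^ 2) w) ∧
  (∀ p : RPoly n, p.totalDegree ≤ k → 0 ≤ pairing (p ^ 2) w)

/-- Feasibility of `w` for the `k`th moment relaxation of (M). -/
def GMomFeas {n m : ℕ} {ι κ : Type} (m1 : ℕ) (a : Fin m → RPoly n) (b : Fin m → ℝ)
    (Es : Finset ι) (ge : ι → RPoly n) (Is : Finset κ) (gi : κ → RPoly n) (k : ℕ)
    (w : (Fin n →₀ ℕ) → ℝ) : Prop :=
  (∀ i : Fin m, (i : ℕ) < m1 → pairing (a i) w = b i) ∧
  (∀ i : Fin m, m1 ≤ (i : ℕ) → b i ≤ pairing (a i) w) ∧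
  MomRelaxPSD Es ge Is gi k w

/-- The optimal value `φ_k` of the `k`th moment relaxation of (M). -/
def GMomVal {n m : ℕ} {ι κ : Type} (m1 : ℕ) (f : RPoly n) (a : Fin m → RPoly n)
    (b : Fin m → ℝ) (Es : Finset ι) (ge : ι → RPoly n) (Is : Finset κ) (gi : κ → RPoly n)
    (k : ℕ) : ℝ :=
  sInf {v : ℝ | ∃ w : (Fin n →₀ ℕ) → ℝ,
      GMomFeas m1 a b Es ge Is gi k w ∧ v = pairing f w}

/-- The optimal value `f_k^den` of the `k`th order relaxation with denominators. -/
def DenRelaxVal {n : ℕ} (E I : Finset ℕ) (c : ℕ → RPoly n) (f : RPoly n) (d k : ℕ) : ℝ :=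
  sSup {γ : ℝ | ∃ p1 ∈ IdealDeg E c (2 * k + d), ∃ p2 ∈ QModDeg I c (2 * k + d),
      (1 + ∑ i, (X i : RPoly n) ^ 2) ^ k * (f - C γ) = p1 + p2}


/-- The degree bound `d_K = max_j ⌈deg(c_j)/2⌉`. -/
def dKOrig {n : ℕ} (E I : Finset ℕ) (c : ℕ → RPoly n) : ℕ :=
  (E ∪ I).sup fun j => ((c j).totalDegree + 1) / 2

/-- The degree bound `d_0` for the GMP relaxations. -/
def d0GMP {n m : ℕ} (f : RPoly n) (a : Fin m → RPoly n) (E I : Finset ℕ)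
    (c : ℕ → RPoly n) : ℕ :=
  max ((f.totalDegree + 1) / 2)
    (max (dKOrig E I c) (Finset.univ.sup fun i : Fin m => ((a i).totalDegree + 1) / 2))

/-- The degree bound `d̃_K` for the homogenized constraining tuples. -/
def dKHom {n : ℕ} (E I : Finset ℕ) (c : ℕ → RPoly n) : ℕ :=
  max ((OS E).sup fun o => ((gEqH c o).totalDegree + 1) / 2)
      ((OS I).sup fun o => ((gInH c o).totalDegree + 1) / 2)

end

theorem exists_state {V : Type*} [AddCommGroup V] [Module ℝ V]
    (C : Set V) (hadd : ∀ v ∈ C, ∀ w ∈ C, v + w ∈ C) (hsmul : ∀ r : ℝ, 0 ≤ r → ∀ v ∈ C, r • v ∈ C)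
    (u : V) (hu : u ∈ C) (hunit : ∀ v, ∃ N : ℝ, N • u + v ∈ C) (v0 : V) (hv0 : v0 ∉ C) :
    ∃ φ : V →ₗ[ℝ] ℝ, (∀ v ∈ C, 0 ≤ φ v) ∧ φ u = 1 ∧ φ v0 ≤ 0 := by
  have h0 : (0:V) ∈ C := by simpa using hsmul 0 le_rfl u hu
  have hnu : -u ∉ C := by
    intro h
    obtain ⟨N, hN⟩ := hunit v0
    apply hv0
    have h1 := hsmul (max N 0) (le_max_right _ _) _ h
    have h2 := hsmul (max N 0 - N) (by linarith [le_max_left N 0]) _ hu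
    have := hadd _ (hadd _ hN _ h1) _ h2
    convert this using 1
    module
  let s : PointedCone ℝ V :=
    { carrier := {w | ∃ c ∈ C, ∃ t : ℝ, 0 ≤ t ∧ w = c - t • v0}
      add_mem' := by
        rintro _ _ ⟨c, hc, t, ht, rfl⟩ ⟨c', hc', t', ht', rfl⟩
        exact ⟨c + c', hadd _ hc _ hc', t + t', by positivity, by module⟩
      zero_mem' := ⟨0, h0, 0, le_rfl, by simp⟩
      smul_mem' := by
        rintro ⟨r, hr⟩ _ ⟨c, hc, t, ht, rfl⟩
        refine ⟨r • c, hsmul r hr c hc, r * t, by positivity, ?_⟩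
        change r • (c - t • v0) = _
        module }
  have hs : ∀ w, w ∈ s ↔ ∃ c ∈ C, ∃ t : ℝ, 0 ≤ t ∧ w = c - t • v0 := fun w => Iff.rfl
  have hnus : -u ∉ s := by
    rw [hs]
    rintro ⟨c, hc, t, ht, h⟩
    rcases ht.eq_or_lt with rfl | ht
    · exact hnu (by simpa [h] using hc)
    · apply hv0
      have : v0 = t⁻¹ • (c + u) := by
        have h3 : t • v0 = c + u := by
          have : t • v0 = c - (c - t • v0) := by module
          rw [this, ← h]; module
        rw [← h3, smul_smul, inv_mul_cancel₀ ht.ne', one_smul]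
      rw [this]
      exact hsmul _ (by positivity) _ (hadd _ hc _ hu)
  have hu0 : u ≠ 0 := by
    rintro rfl
    exact hnu (by simpa using hu)
  obtain ⟨g, hg1, hg2⟩ := riesz_extension s (LinearPMap.mkSpanSingleton (σ := RingHom.id ℝ) u (1:ℝ) hu0) (by
    rintro ⟨x, hx⟩ hxs
    obtain ⟨r, rfl⟩ := Submodule.mem_span_singleton.1 hx
    have hap : (LinearPMap.mkSpanSingleton (σ := RingHom.id ℝ) u (1:ℝ) hu0) ⟨r • u, hx⟩ = r • (1:ℝ) :=
      LinearPMap.mkSpanSingleton'_apply (σ := RingHom.id ℝ) _ _ _ _ _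
    change 0 ≤ (LinearPMap.mkSpanSingleton (σ := RingHom.id ℝ) u (1:ℝ) hu0) ⟨r • u, hx⟩
    rw [hap]
    simp only at hxs
    simp only [smul_eq_mul, mul_one]
    by_contra hr
    push Not at hr
    apply hnus
    have := s.smul_mem (show 0 ≤ (-r)⁻¹ by rw [inv_nonneg]; linarith) hxs
    convert this using 1
    change -u = (-r)⁻¹ • r • u
    rw [smul_smul]
    have : (-r)⁻¹ * r = -1 := by rw [inv_neg, neg_mul, inv_mul_cancel₀ hr.ne]
    rw [this]; module) (by
    intro y
    obtain ⟨N, hN⟩ := hunit y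
    exact ⟨⟨N • u, Submodule.smul_mem _ _ (Submodule.mem_span_singleton_self u)⟩, (hs _).2 ⟨_, hN, 0, le_rfl, by simp⟩⟩)
  refine ⟨g, fun v hv => hg2 v ((hs _).2 ⟨v, hv, 0, le_rfl, by simp⟩), ?_, ?_⟩
  · have := hg1 ⟨u, Submodule.mem_span_singleton_self u⟩
    simp only at this
    rw [this]
    have h := LinearPMap.mkSpanSingleton_apply ℝ ℝ (σ := RingHom.id ℝ) (x := u) hu0 (1:ℝ)
    exact h
  · have := hg2 (-v0) ((hs _).2 ⟨0, h0, 1, by norm_num, by simp⟩)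
    rw [map_neg] at this
    linarith

theorem exists_pure_state {A V : Type*} [CommRing A] [Algebra ℝ A] [AddCommGroup V] [Module ℝ V]
    [Module A V] [IsScalarTower ℝ A V]
    (C : Set V) (hadd : ∀ v ∈ C, ∀ w ∈ C, v + w ∈ C) (hsmul : ∀ r : ℝ, 0 ≤ r → ∀ v ∈ C, r • v ∈ C)
    (harch : ∀ a : A, ∃ R : ℝ, ∀ v ∈ C, R • v - a • v ∈ C)
    (u : V) (hu : u ∈ C) (hunit : ∀ v, ∃ N : ℝ, N • u + v ∈ C) (v0 : V) (hv0 : v0 ∉ C) :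
    ∃ (φ : V →ₗ[ℝ] ℝ) (χ : A →ₐ[ℝ] ℝ), (∀ v ∈ C, 0 ≤ φ v) ∧ φ u = 1 ∧ φ v0 ≤ 0 ∧
      ∀ (a : A) (v : V), φ (a • v) = χ a * φ v := by
  obtain ⟨φ0, hφ0, hφ0u, hφ0v⟩ := exists_state C hadd hsmul u hu hunit v0 hv0
  let S : Set (V → ℝ) := {φ | (∀ v w, φ (v + w) = φ v + φ w) ∧ (∀ (r : ℝ) v, φ (r • v) = r * φ v) ∧
    (∀ v ∈ C, 0 ≤ φ v) ∧ φ u = 1}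
  have hScl : IsClosed S := by
    have e : S = (⋂ v, ⋂ w, {φ : V → ℝ | φ (v + w) = φ v + φ w}) ∩
        ((⋂ r : ℝ, ⋂ v, {φ : V → ℝ | φ (r • v) = r * φ v}) ∩
        ((⋂ v ∈ C, {φ : V → ℝ | 0 ≤ φ v}) ∩ {φ : V → ℝ | φ u = 1})) := by
      ext φ
      simp [S, Set.mem_iInter]
    rw [e]
    refine IsClosed.inter ?_ (IsClosed.inter ?_ (IsClosed.inter ?_ ?_))
    · refine isClosed_iInter fun v => isClosed_iInter fun w => isClosed_eq ?_ ?_ <;> fun_prop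
    · refine isClosed_iInter fun v => isClosed_iInter fun w => isClosed_eq ?_ ?_ <;> fun_prop
    · refine isClosed_iInter fun v => isClosed_iInter fun w => isClosed_le ?_ ?_ <;> fun_prop
    · exact isClosed_eq (by fun_prop) (by fun_prop)
  choose B hB using hunit
  have hScomp : IsCompact S := by
    refine IsCompact.of_isClosed_subset (isCompact_univ_pi (s := fun v => Set.Icc (-B v) (B (-v)))
      fun v => isCompact_Icc) hScl ?_
    rintro φ ⟨h1, h2, h3, h4⟩ v -
    have a1 := h3 _ (hB v)
    have a2 := h3 _ (hB (-v))
    have a3 : φ (-v) = - φ v := by simpa using h2 (-1) v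
    rw [h1, h2, h4] at a1 a2
    rw [a3] at a2
    constructor <;> linarith
  have hφ0S : (φ0 : V → ℝ) ∈ S := ⟨by simp, by simp, hφ0, hφ0u⟩
  let l : StrongDual ℝ (V → ℝ) := - ContinuousLinearMap.proj v0
  have hl : ∀ φ : V → ℝ, l φ = - φ v0 := fun φ => rfl
  let S0 : Set (V → ℝ) := {φ | φ ∈ S ∧ ∀ ψ ∈ S, l ψ ≤ l φ}
  have hexp : IsExposed ℝ S S0 := fun _ => ⟨l, rfl⟩
  have hS0ne : S0.Nonempty := by
    obtain ⟨φ, hφ, hm⟩ := hScomp.exists_isMaxOn ⟨_, hφ0S⟩ l.continuous.continuousOn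
    exact ⟨φ, hφ, fun ψ hψ => hm hψ⟩
  have hS0c : IsCompact S0 := hexp.isCompact hScomp
  obtain ⟨φ, hφ⟩ := hS0c.extremePoints_nonempty hS0ne
  have hφS := hexp.isExtreme.extremePoints_subset_extremePoints hφ
  have hφv : φ v0 ≤ 0 := by
    have := hφ.1.2 _ hφ0S
    rw [hl, hl] at this
    linarith
  rw [mem_extremePoints] at hφS
  obtain ⟨hmem, hext⟩ := hφS
  obtain ⟨k1, k2, k3, k4⟩ := hmem
  have kneg : ∀ v, φ (-v) = - φ v := fun v => by simpa using k2 (-1) v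
  have ksub : ∀ v w, φ (v - w) = φ v - φ w := fun v w => by rw [sub_eq_add_neg, k1, kneg, sub_eq_add_neg]
  have key : ∀ (a : A) (v : V), φ (a • v) = φ (a • u) * φ v := by
    intro a
    obtain ⟨R2, hR2⟩ := harch a
    obtain ⟨R1, hR1⟩ := harch (-a)
    have p1 : ∀ v, φ (R1 • v - (-a) • v) = R1 * φ v + φ (a • v) := by
      intro v; rw [ksub, k2, neg_smul, kneg]; ring
    have p2 : ∀ v, φ (R2 • v - a • v) = R2 * φ v - φ (a • v) := by
      intro v; rw [ksub, k2]
    have q1 := k3 _ (hR1 u hu)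
    have q2 := k3 _ (hR2 u hu)
    rw [p1, k4] at q1
    rw [p2, k4] at q2
    set m := φ (a • u) with hm
    have hα : 0 < R1 + 1 + m := by linarith
    have hβ : 0 < R2 + 1 - m := by linarith
    have asm : ∀ (r : ℝ) (v : V), a • r • v = r • a • v := by
      intro r v
      rw [← algebraMap_smul A r v, ← algebraMap_smul A r (a • v), smul_smul, smul_smul, mul_comm]
    have := hext (fun v => ((R1 + 1) * φ v + φ (a • v)) / (R1 + 1 + m)) ?_
      (fun v => ((R2 + 1) * φ v - φ (a • v)) / (R2 + 1 - m)) ?_ ?_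
    · intro v
      have h := congrFun this.1 v
      beta_reduce at h
      rw [div_eq_iff hα.ne'] at h
      linarith
    · refine ⟨?_, ?_, ?_, ?_⟩
      · intro v w; beta_reduce; rw [k1, smul_add, k1]; ring
      · intro r v; beta_reduce; rw [k2, asm, k2]; ring
      · intro v hv
        have e1 := k3 _ (hR1 v hv)
        rw [p1] at e1
        have e2 := k3 v hv
        apply div_nonneg _ hα.le
        linarith
      · beta_reduce; rw [k4, ← hm, mul_one, div_self hα.ne']
    · refine ⟨?_, ?_, ?_, ?_⟩
      · intro v w; beta_reduce; rw [k1, smul_add, k1]; ring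
      · intro r v; beta_reduce; rw [k2, asm, k2]; ring
      · intro v hv
        have e1 := k3 _ (hR2 v hv)
        rw [p2] at e1
        have e2 := k3 v hv
        apply div_nonneg _ hβ.le
        linarith
      · beta_reduce; rw [k4, ← hm, mul_one, div_self hβ.ne']
    · refine ⟨(R1 + 1 + m) / (R1 + R2 + 2), (R2 + 1 - m) / (R1 + R2 + 2), ?_, ?_, ?_, ?_⟩
      · apply div_pos hα; linarith
      · apply div_pos hβ; linarith
      · have : R1 + R2 + 2 ≠ 0 := by linarith
        field_simp; ring
      · have : R1 + R2 + 2 ≠ 0 := by linarith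
        ext v
        simp only [Pi.add_apply, Pi.smul_apply, smul_eq_mul]
        field_simp
        ring
  let χ : A →ₐ[ℝ] ℝ := AlgHom.ofLinearMap
    { toFun := fun a => φ (a • u)
      map_add' := fun a b => by rw [add_smul, k1]
      map_smul' := fun r a => by rw [smul_assoc, k2]; simp } (by simp [k4])
      (fun a b => by
        change φ ((a * b) • u) = φ (a • u) * φ (b • u)
        rw [mul_smul, key])
  exact ⟨{ toFun := φ, map_add' := k1, map_smul' := fun r v => by simp [k2] }, χ, k3, k4, hφv, key⟩

/-- The quadratic module plus ideal, as an additive submonoid. -/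
noncomputable def Mc {N : ℕ} {ι κ : Type} (Es : Finset ι) (ge : ι → RPoly N) (Is : Finset κ) (gi : κ → RPoly N) :
    AddSubmonoid (RPoly N) :=
  AddSubmonoid.closure {p | (∃ a, p = a ^ 2) ∨ (∃ j ∈ Is, ∃ a, p = gi j * a ^ 2) ∨
    (∃ j ∈ Es, ∃ a, p = ge j * a)}

section McLemmas
variable {N : ℕ} {ι κ : Type} {Es : Finset ι} {ge : ι → RPoly N} {Is : Finset κ} {gi : κ → RPoly N}

theorem Mc_sq (a : RPoly N) : a ^ 2 ∈ Mc Es ge Is gi :=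
  AddSubmonoid.subset_closure (Or.inl ⟨a, rfl⟩)

theorem Mc_gi {j : κ} (hj : j ∈ Is) (a : RPoly N) : gi j * a ^ 2 ∈ Mc Es ge Is gi :=
  AddSubmonoid.subset_closure (Or.inr (Or.inl ⟨j, hj, a, rfl⟩))

theorem Mc_ge {j : ι} (hj : j ∈ Es) (a : RPoly N) : ge j * a ∈ Mc Es ge Is gi :=
  AddSubmonoid.subset_closure (Or.inr (Or.inr ⟨j, hj, a, rfl⟩))

theorem Mc_sq_mul (a : RPoly N) {p : RPoly N} (hp : p ∈ Mc Es ge Is gi) :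
    a ^ 2 * p ∈ Mc Es ge Is gi := by
  unfold Mc at hp
  induction hp using AddSubmonoid.closure_induction with
  | mem x hx =>
    rcases hx with ⟨b, rfl⟩ | ⟨j, hj, b, rfl⟩ | ⟨j, hj, b, rfl⟩
    · rw [← mul_pow]; exact Mc_sq _
    · have : a ^ 2 * (gi j * b ^ 2) = gi j * (a * b) ^ 2 := by ring
      rw [this]; exact Mc_gi hj _
    · have : a ^ 2 * (ge j * b) = ge j * (a ^ 2 * b) := by ring
      rw [this]; exact Mc_ge hj _
  | zero => simp
  | add x y _ _ hx hy => rw [mul_add]; exact add_mem hx hy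

theorem Mc_nn {r : ℝ} (hr : 0 ≤ r) {p : RPoly N} (hp : p ∈ Mc Es ge Is gi) :
    C r * p ∈ Mc Es ge Is gi := by
  have : (C r : RPoly N) = (C (Real.sqrt r)) ^ 2 := by rw [← C_pow, Real.sq_sqrt hr]
  rw [this]; exact Mc_sq_mul _ hp

theorem Mc_T_mul {t p : RPoly N} (ht : t ∈ Mc Es ge (∅ : Finset κ) gi) (hp : p ∈ Mc Es ge Is gi) :
    t * p ∈ Mc Es ge Is gi := by
  unfold Mc at ht
  induction ht using AddSubmonoid.closure_induction with
  | mem x hx =>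
    rcases hx with ⟨b, rfl⟩ | ⟨j, hj, b, rfl⟩ | ⟨j, hj, b, rfl⟩
    · exact Mc_sq_mul _ hp
    · simp at hj
    · rw [mul_assoc]; exact Mc_ge hj _
  | zero => simp
  | add x y _ _ hx hy => rw [add_mul]; exact add_mem hx hy

theorem Mc_arch_sq {j0 : ι} (hj0 : j0 ∈ Es) (hs : ge j0 = (∑ i, (X i : RPoly N) ^ 2) - 1)
    (a : RPoly N) : ∃ R : ℝ, 0 ≤ R ∧ C R - a ^ 2 ∈ Mc Es ge Is gi := by
  induction a using MvPolynomial.induction_on with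
  | C r =>
    refine ⟨r ^ 2, sq_nonneg _, ?_⟩
    rw [C_pow, sub_self]; exact zero_mem _
  | add p q hp hq =>
    obtain ⟨R, hR, hp⟩ := hp
    obtain ⟨S, hS, hq⟩ := hq
    refine ⟨2 * R + 2 * S, by positivity, ?_⟩
    have : C (2 * R + 2 * S) - (p + q) ^ 2
        = C 2 * (C R - p ^ 2) + C 2 * (C S - q ^ 2) + (p - q) ^ 2 := by
      rw [C_add, C_mul, C_mul, show (C (2:ℝ) : RPoly N) = 2 from rfl]; ring
    rw [this]
    exact add_mem (add_mem (Mc_nn (by norm_num) hp) (Mc_nn (by norm_num) hq)) (Mc_sq _)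
  | mul_X p i hp =>
    obtain ⟨R, hR, hp⟩ := hp
    refine ⟨R, hR, ?_⟩
    have h1 : (1 : RPoly N) - X i ^ 2 ∈ Mc Es ge Is gi := by
      have : (1 : RPoly N) - X i ^ 2 = (∑ k ∈ Finset.univ.erase i, (X k : RPoly N) ^ 2) + ge j0 * (-1) := by
        rw [hs, ← Finset.add_sum_erase _ _ (Finset.mem_univ i)]; ring
      rw [this]
      exact add_mem (sum_mem fun k _ => Mc_sq _) (Mc_ge hj0 _)
    have : C R - (p * X i) ^ 2 = C R * (1 - X i ^ 2) + X i ^ 2 * (C R - p ^ 2) := by ring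
    rw [this]
    exact add_mem (Mc_nn hR h1) (Mc_sq_mul _ hp)

theorem Mc_arch {j0 : ι} (hj0 : j0 ∈ Es) (hs : ge j0 = (∑ i, (X i : RPoly N) ^ 2) - 1)
    (a : RPoly N) : ∃ R : ℝ, C R - a ∈ Mc Es ge Is gi := by
  obtain ⟨R, hR, h⟩ := Mc_arch_sq (Is := Is) (gi := gi) hj0 hs a
  refine ⟨R + (1/2) ^ 2, ?_⟩
  have h2 : (2 : RPoly N) * C (1/2) = 1 := by
    rw [show (2 : RPoly N) = C 2 from rfl, ← C_mul]; norm_num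
  have : C (R + (1/2) ^ 2) - a = (C R - a ^ 2) + (a - C (1/2)) ^ 2 := by
    rw [C_add, C_pow]; linear_combination a * h2
  rw [this]
  exact add_mem h (Mc_sq _)

end McLemmas

theorem taylor1 {N : ℕ} (p : RPoly N) (z : Fin N → ℝ) :
    ∃ c : Fin N → RPoly N, p = C (eval z p) + ∑ l, c l * (X l - C (z l)) ∧
      ∀ l, eval z (c l) = eval z (pderiv l p) := by
  have key : ∃ c : Fin N → RPoly N, p = C (eval z p) + ∑ l, c l * (X l - C (z l)) := by
    induction p using MvPolynomial.induction_on with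
    | C r => exact ⟨0, by simp⟩
    | add p q hp hq =>
      obtain ⟨c, hc⟩ := hp
      obtain ⟨e, he⟩ := hq
      refine ⟨c + e, ?_⟩
      nth_rewrite 1 [hc, he]
      simp only [map_add, Pi.add_apply, add_mul, Finset.sum_add_distrib]
      ring
    | mul_X p i hp =>
      obtain ⟨c, hc⟩ := hp
      refine ⟨fun l => c l * X i + (if l = i then C (eval z p) else 0), ?_⟩
      nth_rewrite 1 [hc]
      simp only [map_mul, eval_X, add_mul, Finset.sum_add_distrib, ite_mul, zero_mul,
        Finset.sum_ite_eq', Finset.mem_univ, if_true, Finset.sum_mul]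
      have : ∀ l, c l * (X l - C (z l)) * X i = c l * X i * (X l - C (z l)) := fun l => by ring
      simp only [this]
      ring
  obtain ⟨c, hc⟩ := key
  refine ⟨c, hc, fun l => ?_⟩
  have : pderiv l p = ∑ k, (c k * (pderiv l (X k)) + (X k - C (z k)) * pderiv l (c k)) := by
    conv_lhs => rw [hc]
    simp [Derivation.leibniz]
  rw [this]
  simp [pderiv_X, Pi.single_apply, apply_ite]

theorem taylor2 {N : ℕ} (p : RPoly N) (z : Fin N → ℝ) (h0 : eval z p = 0)
    (h1 : ∀ l, eval z (pderiv l p) = 0) :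
    ∃ a : Fin N → Fin N → RPoly N,
      p = ∑ k, ∑ l, a k l * ((X k - C (z k)) * (X l - C (z l))) ∧
      ∀ k l, eval z (a k l) + eval z (a l k) = eval z (pderiv k (pderiv l p)) := by
  obtain ⟨c, hc, hcd⟩ := taylor1 p z
  choose a ha had using fun k => taylor1 (c k) z
  refine ⟨a, ?_, fun k l => ?_⟩
  · nth_rewrite 1 [hc]
    rw [h0, C_0, zero_add]
    refine Finset.sum_congr rfl fun k _ => ?_
    nth_rewrite 1 [ha k]
    rw [hcd, h1, C_0, zero_add, Finset.sum_mul]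
    refine Finset.sum_congr rfl fun l _ => ?_
    ring
  · rw [had, had]
    have e1 : pderiv l p = c l + ∑ m, (X m - C (z m)) * pderiv l (c m) := by
      conv_lhs => rw [hc]
      simp [Derivation.leibniz, pderiv_X, Pi.single_apply, Finset.sum_add_distrib]
    rw [e1]
    simp [Derivation.leibniz, pderiv_X, Pi.single_apply, apply_ite]
    ring

theorem local_decomp {N : ℕ} {ι κ : Type} (Es : Finset ι) (ge : ι → RPoly N) (Is : Finset κ)
    (gi : κ → RPoly N) (F : RPoly N) (z : Fin N → ℝ) (hE : ∀ j ∈ Es, eval z (ge j) = 0)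
    (hF : eval z F = 0) (h : OptCondsAt Es ge Is gi F z) :
    ∃ (lamE : ι → ℝ) (lamI : κ → ℝ) (a : Fin N → Fin N → RPoly N),
      F = ∑ j ∈ Es, C (lamE j) * ge j + ∑ j ∈ Is, C (lamI j) * gi j +
        ∑ k, ∑ l, a k l * ((X k - C (z k)) * (X l - C (z l))) ∧
      (∀ j ∈ Is, 0 ≤ lamI j ∧ lamI j * eval z (gi j) = 0) ∧
      (∀ j ∈ Is, 0 < lamI j + eval z (gi j)) ∧
      (∀ v : Fin N → ℝ, v ≠ 0 →
        (∀ j ∈ Es, (∑ i, v i * eval z (pderiv i (ge j))) = 0) →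
        (∀ j ∈ Is, eval z (gi j) = 0 → (∑ i, v i * eval z (pderiv i (gi j))) = 0) →
        0 < ∑ k, ∑ l, v k * v l * eval z (a k l)) := by
  obtain ⟨-, lamE, lamI, hk, hc, hsc, hso⟩ := h
  let L : RPoly N := F - ∑ j ∈ Es, C (lamE j) * ge j - ∑ j ∈ Is, C (lamI j) * gi j
  have hL0 : eval z L = 0 := by
    simp only [L, map_sub, map_sum, map_mul, eval_C, hF]
    rw [Finset.sum_eq_zero (fun j hj => by rw [hE j hj, mul_zero]),
      Finset.sum_eq_zero (fun j hj => (hc j hj).2)]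
    simp
  have hL1 : ∀ l, eval z (pderiv l L) = 0 := by
    intro l
    have := congrFun hk l
    simp only [gradP, Pi.add_apply, Finset.sum_apply, Pi.smul_apply, smul_eq_mul] at this
    simp only [L, map_sub, map_sum, pderiv_C_mul, map_mul, eval_C, this]
    ring
  obtain ⟨a, ha, had⟩ := taylor2 L z hL0 hL1
  refine ⟨lamE, lamI, a, ?_, hc, hsc, fun v hv h1 h2 => ?_⟩
  · rw [← ha]; simp only [L]; ring
  · have := hso v hv h1 h2
    have e : ∀ i i', (hessP F z i i' - ∑ j ∈ Es, lamE j * hessP (ge j) z i i')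
          - ∑ j ∈ Is, lamI j * hessP (gi j) z i i' = eval z (a i i') + eval z (a i' i) := by
      intro i i'
      rw [had]
      simp only [L, map_sub, map_sum, pderiv_C_mul, map_mul, eval_C, hessP]
    simp only [e] at this
    have e2 : ∑ i, ∑ i', v i * (eval z (a i i') + eval z (a i' i)) * v i'
        = 2 * ∑ k, ∑ l, v k * v l * eval z (a k l) := by
      have : ∑ k, ∑ l, v k * v l * eval z (a k l) = ∑ k, ∑ l, v k * v l * eval z (a l k) := by
        rw [Finset.sum_comm]
        refine Finset.sum_congr rfl fun k _ => Finset.sum_congr rfl fun l _ => by ring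
      rw [two_mul]
      nth_rewrite 2 [this]
      simp only [← Finset.sum_add_distrib]
      refine Finset.sum_congr rfl fun k _ => Finset.sum_congr rfl fun l _ => by ring
    rw [e2] at this
    linarith

open Filter Topology in
theorem zeros_finite {N : ℕ} {ι κ : Type} (Es : Finset ι) (ge : ι → RPoly N) (Is : Finset κ)
    (gi : κ → RPoly N) (F : RPoly N) (Kf : Set (Fin N → ℝ))
    (hKf : Kf = {x | (∀ j ∈ Es, eval x (ge j) = 0) ∧ (∀ j ∈ Is, 0 ≤ eval x (gi j))})
    (hcomp : IsCompact Kf)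
    (hopt : ∀ x ∈ Kf, eval x F = 0 → OptCondsAt Es ge Is gi F x) :
    {x | x ∈ Kf ∧ eval x F = 0}.Finite := by
  by_contra hinf
  have hZc : IsCompact {x | x ∈ Kf ∧ eval x F = 0} :=
    hcomp.inter_right (isClosed_eq (continuous_eval F) continuous_const)
  obtain ⟨z, hz, hacc⟩ := Set.Infinite.exists_accPt_of_subset_isCompact hinf hZc subset_rfl
  have hzf := hz.1
  rw [hKf] at hzf
  obtain ⟨lamE, lamI, a, hFe, hc, hsc, hso⟩ :=
    local_decomp Es ge Is gi F z hzf.1 hz.2 (hopt z hz.1 hz.2)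
  rw [accPt_iff_frequently] at hacc
  obtain ⟨x, hxt, hx⟩ := exists_seq_forall_of_frequently hacc
  -- normalised directions
  let r : ℕ → ℝ := fun m => ‖x m - z‖
  have hr : ∀ m, 0 < r m := fun m => norm_pos_iff.2 (sub_ne_zero.2 (hx m).1)
  let v : ℕ → (Fin N → ℝ) := fun m => (r m)⁻¹ • (x m - z)
  have hvs : ∀ m, v m ∈ Metric.sphere (0 : Fin N → ℝ) 1 := by
    intro m
    simp only [v, mem_sphere_zero_iff_norm, norm_smul, norm_inv, Real.norm_eq_abs, abs_of_pos (hr m)]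
    exact inv_mul_cancel₀ (hr m).ne'
  obtain ⟨w, hw, ψ, hψ, hlim⟩ := (isCompact_sphere (0 : Fin N → ℝ) 1).tendsto_subseq hvs
  have hw0 : w ≠ 0 := by
    rintro rfl
    simp at hw
  have hxl : Tendsto (fun m => x (ψ m)) atTop (𝓝 z) := hxt.comp hψ.tendsto_atTop
  have hrl : Tendsto (fun m => r (ψ m)) atTop (𝓝 0) := by
    have := (hxl.sub_const z).norm
    simpa using this
  have hev : ∀ p : RPoly N, Tendsto (fun m => eval (x (ψ m)) p) atTop (𝓝 (eval z p)) := fun p =>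
    ((continuous_eval p).tendsto z).comp hxl
  have hvl : ∀ i, Tendsto (fun m => v (ψ m) i) atTop (𝓝 (w i)) := fun i =>
    (tendsto_pi_nhds.1 hlim) i
  have hxv : ∀ m i, x m i - z i = r m * v m i := by
    intro m i
    simp only [v, Pi.smul_apply, Pi.sub_apply, smul_eq_mul]
    rw [mul_inv_cancel_left₀ (hr m).ne']
  have hfeas : ∀ m, (∀ j ∈ Es, eval (x m) (ge j) = 0) ∧ (∀ j ∈ Is, 0 ≤ eval (x m) (gi j)) := by
    intro m
    have := (hx m).2.1
    rw [hKf] at this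
    exact this
  -- first order quotient
  have first : ∀ p : RPoly N, eval z p = 0 →
      Tendsto (fun m => eval (x (ψ m)) p / r (ψ m)) atTop (𝓝 (∑ i, w i * eval z (pderiv i p))) := by
    intro p hp
    obtain ⟨b, hb, hbd⟩ := taylor1 p z
    have e : ∀ m, eval (x (ψ m)) p / r (ψ m) = ∑ i, v (ψ m) i * eval (x (ψ m)) (b i) := by
      intro m
      conv_lhs => rw [hb]
      simp only [hp, C_0, zero_add, map_sum, map_mul, map_sub, eval_X, eval_C, hxv]
      rw [Finset.sum_div]
      refine Finset.sum_congr rfl fun i _ => ?_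
      have := (hr (ψ m)).ne'
      field_simp
    simp only [e, ← hbd]
    exact tendsto_finsetSum _ fun i _ => (hvl i).mul (hev _)
  have hE1 : ∀ j ∈ Es, (∑ i, w i * eval z (pderiv i (ge j))) = 0 := by
    intro j hj
    refine tendsto_nhds_unique (first _ (hzf.1 j hj)) ?_
    simp only [(hfeas _).1 j hj, zero_div]
    exact tendsto_const_nhds
  have hI1 : ∀ j ∈ Is, eval z (gi j) = 0 → 0 ≤ (∑ i, w i * eval z (pderiv i (gi j))) := by
    intro j hj h0
    exact ge_of_tendsto' (first _ h0) fun m => div_nonneg ((hfeas _).2 j hj) (hr _).le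
  let Q : ℕ → ℝ := fun m => ∑ k, ∑ l, v (ψ m) k * v (ψ m) l * eval (x (ψ m)) (a k l)
  have hQ : Tendsto Q atTop (𝓝 (∑ k, ∑ l, w k * w l * eval z (a k l))) :=
    tendsto_finsetSum _ fun k _ => tendsto_finsetSum _ fun l _ => ((hvl k).mul (hvl l)).mul (hev _)
  have hmain : ∀ m, (∑ j ∈ Is, lamI j * eval (x (ψ m)) (gi j)) + r (ψ m) ^ 2 * Q m = 0 := by
    intro m
    have h0 := (hx (ψ m)).2.2
    rw [hFe] at h0
    simp only [map_add, map_sum, map_mul, map_sub, eval_X, eval_C, hxv] at h0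
    rw [Finset.sum_eq_zero (s := Es) (fun j hj => by rw [(hfeas _).1 j hj, mul_zero]), zero_add] at h0
    rw [← h0]
    congr 1
    simp only [Q, Finset.mul_sum]
    refine Finset.sum_congr rfl fun k _ => Finset.sum_congr rfl fun l _ => by ring
  have hI2 : ∀ j ∈ Is, eval z (gi j) = 0 → (∑ i, w i * eval z (pderiv i (gi j))) = 0 := by
    have t1 : ∀ j ∈ Is, Tendsto (fun m => lamI j * (eval (x (ψ m)) (gi j) / r (ψ m))) atTop
        (𝓝 (lamI j * (∑ i, w i * eval z (pderiv i (gi j))))) := by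
      intro j hj
      by_cases h0 : eval z (gi j) = 0
      · exact (first _ h0).const_mul _
      · have : lamI j = 0 := by
          rcases mul_eq_zero.1 (hc j hj).2 with h | h
          · exact h
          · exact absurd h h0
        simp [this]
    have t2 := (tendsto_finsetSum Is t1).add (hrl.mul hQ)
    have t3 : (fun m => (∑ j ∈ Is, lamI j * (eval (x (ψ m)) (gi j) / r (ψ m))) + r (ψ m) * Q m)
        = fun _ => 0 := by
      funext m
      have h1 := hmain m
      have h2 := (hr (ψ m)).ne'
      have : (∑ j ∈ Is, lamI j * (eval (x (ψ m)) (gi j) / r (ψ m))) + r (ψ m) * Q m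
        = ((∑ j ∈ Is, lamI j * eval (x (ψ m)) (gi j)) + r (ψ m) ^ 2 * Q m) / r (ψ m) := by
        rw [add_div, Finset.sum_div]
        congr 1
        · refine Finset.sum_congr rfl fun j _ => by ring
        · field_simp
      rw [this, h1, zero_div]
    rw [t3, zero_mul, add_zero] at t2
    have t4 := tendsto_nhds_unique t2 tendsto_const_nhds
    have hnn : ∀ j ∈ Is, 0 ≤ lamI j * (∑ i, w i * eval z (pderiv i (gi j))) := by
      intro j hj
      by_cases h0 : eval z (gi j) = 0
      · exact mul_nonneg (hc j hj).1 (hI1 j hj h0)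
      · rcases mul_eq_zero.1 (hc j hj).2 with h | h
        · simp [h]
        · exact absurd h h0
    rw [Finset.sum_eq_zero_iff_of_nonneg hnn] at t4
    intro j hj h0
    have h1 := hsc j hj
    rw [h0, add_zero] at h1
    rcases mul_eq_zero.1 (t4 j hj) with h | h
    · exact absurd h h1.ne'
    · exact h
  have hpos := hso w hw0 hE1 hI2
  have : (∑ k, ∑ l, w k * w l * eval z (a k l)) ≤ 0 := by
    refine le_of_tendsto' hQ fun m => ?_
    have h1 := hmain m
    have h2 : 0 ≤ ∑ j ∈ Is, lamI j * eval (x (ψ m)) (gi j) :=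
      Finset.sum_nonneg fun j hj => mul_nonneg (hc j hj).1 ((hfeas _).2 j hj)
    have h3 : 0 < r (ψ m) ^ 2 := pow_pos (hr _) 2
    by_contra h4
    push Not at h4
    have := mul_pos h3 h4
    linarith
  linarith

theorem psd_pair {N : ℕ} (Φ : Fin N → Fin N → ℝ) (hsym : ∀ k l, Φ k l = Φ l k)
    (hpsd : ∀ v : Fin N → ℝ, 0 ≤ ∑ k, ∑ l, v k * v l * Φ k l)
    (G : Set (Fin N → ℝ)) (hG : ∀ g ∈ G, ∀ k, ∑ l, g l * Φ k l = 0)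
    (a : Fin N → Fin N → ℝ)
    (ha : ∀ v : Fin N → ℝ, v ≠ 0 → (∀ g ∈ G, ∑ i, v i * g i = 0) →
      0 < ∑ k, ∑ l, v k * v l * a k l) :
    0 ≤ ∑ k, ∑ l, a k l * Φ k l ∧ ((∑ k, ∑ l, a k l * Φ k l) = 0 → ∀ k l, Φ k l = 0) := by
  have hP : (Matrix.of Φ).PosSemidef := by
    refine Matrix.PosSemidef.of_dotProduct_mulVec_nonneg ?_ ?_
    · ext k l
      simp [Matrix.conjTranspose_apply, hsym k l]
    · intro v
      have := hpsd v
      simp only [dotProduct, Matrix.mulVec, Finset.mul_sum, star_trivial, Matrix.of_apply]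
      refine this.trans_eq ?_
      refine Finset.sum_congr rfl fun k _ => Finset.sum_congr rfl fun l _ => by ring
  obtain ⟨m, B, hB⟩ := Matrix.posSemidef_iff_eq_sum_vecMulVec.1 hP
  have hΦ : ∀ k l, Φ k l = ∑ i, B i k * B i l := by
    intro k l
    have := congrFun (congrFun hB k) l
    simpa [Matrix.sum_apply, Matrix.vecMulVec_apply] using this
  have htan : ∀ i, ∀ g ∈ G, ∑ k, B i k * g k = 0 := by
    intro i g hg
    have h1 : ∑ i, (∑ k, B i k * g k) ^ 2 = ∑ k, g k * ∑ l, g l * Φ k l := by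
      simp only [hΦ, sq, Finset.mul_sum, Finset.sum_mul]
      rw [Finset.sum_comm]
      refine Finset.sum_congr rfl fun k _ => ?_
      rw [Finset.sum_comm]
      refine Finset.sum_congr rfl fun l _ => Finset.sum_congr rfl fun i _ => by ring
    rw [Finset.sum_eq_zero (s := Finset.univ) (f := fun k => g k * ∑ l, g l * Φ k l)
      (fun k _ => by rw [hG g hg k, mul_zero])] at h1
    rw [Finset.sum_eq_zero_iff_of_nonneg (fun _ _ => sq_nonneg _)] at h1
    exact pow_eq_zero_iff (two_ne_zero) |>.1 (h1 i (Finset.mem_univ _))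
  have hsum : ∑ k, ∑ l, a k l * Φ k l = ∑ i, ∑ k, ∑ l, B i k * B i l * a k l := by
    simp only [hΦ, Finset.mul_sum]
    rw [Finset.sum_comm (s := (Finset.univ : Finset (Fin m)))]
    refine Finset.sum_congr rfl fun k _ => ?_
    rw [Finset.sum_comm]
    refine Finset.sum_congr rfl fun i _ => Finset.sum_congr rfl fun l _ => by ring
  have hnn : ∀ i ∈ (Finset.univ : Finset (Fin m)), 0 ≤ ∑ k, ∑ l, B i k * B i l * a k l := by
    intro i _
    by_cases h : B i = 0
    · simp [h]
    · exact (ha (B i) h (htan i)).le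
  rw [hsum]
  refine ⟨Finset.sum_nonneg hnn, fun h0 => ?_⟩
  rw [Finset.sum_eq_zero_iff_of_nonneg hnn] at h0
  have hB0 : ∀ i, B i = 0 := by
    intro i
    by_contra h
    exact (ha (B i) h (htan i)).ne' (h0 i (Finset.mem_univ _))
  intro k l
  simp [hΦ, hB0]

theorem exists_idem_poly {N : ℕ} (t : Finset (Fin N → ℝ)) (ht : t.Nonempty) :
    ∃ e b : (Fin N → ℝ) → RPoly N,
      (∀ z ∈ t, ∀ z' ∈ t, z' ≠ z → eval z' (e z) = 0) ∧ (∀ z ∈ t, eval z (e z) = 1) ∧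
      (∑ z ∈ t, e z = 1) ∧ (∑ z ∈ t, b z * e z ^ 2 = 1) := by
  classical
  let m : (Fin N → ℝ) → Ideal (RPoly N) := fun z => RingHom.ker (eval z : RPoly N →+* ℝ)
  have hpw : (t : Set (Fin N → ℝ)).Pairwise fun i j => m i ⊔ m j = ⊤ := by
    intro z _ z' _ hne
    obtain ⟨i, hi⟩ := Function.ne_iff.1 hne
    have hi' : z' i - z i ≠ 0 := sub_ne_zero.2 (Ne.symm hi)
    rw [Ideal.eq_top_iff_one]
    have : (1 : RPoly N) = C (z' i - z i)⁻¹ * (X i - C (z i)) + C (z' i - z i)⁻¹ * (C (z' i) - X i) := by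
      have h1 : (C (z' i - z i)⁻¹ * C (z' i - z i) : RPoly N) = 1 := by
        rw [← C_mul, inv_mul_cancel₀ hi', C_1]
      rw [← h1, C_sub]; ring
    rw [this]
    refine Submodule.add_mem_sup ?_ ?_
    · simp [m, RingHom.mem_ker]
    · simp [m, RingHom.mem_ker]
  have h1 := (Ideal.iSup_iInf_eq_top_iff_pairwise ht m).2 hpw
  rw [Ideal.eq_top_iff_one, Submodule.mem_iSup_finset_iff_exists_sum] at h1
  obtain ⟨μ, hμ⟩ := h1
  let e : (Fin N → ℝ) → RPoly N := fun z => (μ z : RPoly N)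
  have he0 : ∀ z ∈ t, ∀ z' ∈ t, z' ≠ z → eval z' (e z) = 0 := by
    intro z _ z' hz' hne
    have := (μ z).2
    simp only [Submodule.mem_iInf] at this
    exact this z' hz' hne
  have hsum : ∑ z ∈ t, e z = 1 := hμ
  have he1 : ∀ z ∈ t, eval z (e z) = 1 := by
    intro z hz
    have := congrArg (eval z) hsum
    rw [map_sum, map_one, Finset.sum_eq_single z] at this
    · exact this
    · intro z' hz' hne; exact he0 z' hz' z hz hne.symm
    · intro h; exact absurd hz h
  have h2 : Ideal.span (e '' (t : Set (Fin N → ℝ))) = ⊤ := by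
    rw [Ideal.eq_top_iff_one, ← hsum]
    exact Ideal.sum_mem _ fun z hz => Ideal.subset_span ⟨z, hz, rfl⟩
  have h3 := Ideal.span_pow_eq_top _ h2 2
  rw [← Set.image_comp, Ideal.eq_top_iff_one] at h3
  obtain ⟨b, hb⟩ := (Submodule.mem_span_image_finset_iff_exists_fun' (R := RPoly N)).1 h3
  exact ⟨e, b, he0, he1, hsum, by simpa using hb⟩

/-- An algebra morphism from polynomials to the reals is an evaluation. -/
theorem char_eval {N : ℕ} (χ : RPoly N →ₐ[ℝ] ℝ) : ∃ x : Fin N → ℝ, ∀ p, χ p = eval x p := by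
  refine ⟨fun i => χ (X i), fun p => ?_⟩
  have := MvPolynomial.aeval_unique χ
  rw [this]
  simp [aeval_eq_eval, Function.comp_def]

theorem ideal_state {N : ℕ} {ι κ : Type} {Es : Finset ι} {ge : ι → RPoly N} {Is : Finset κ}
    {gi : κ → RPoly N} {j0 : ι} (hj0 : j0 ∈ Es) (hs : ge j0 = (∑ i, (X i : RPoly N) ^ 2) - 1)
    (I : Ideal (RPoly N)) (u F : RPoly N) (huI : u ∈ I) (hu : u ∈ Mc Es ge Is gi)
    (hunit : ∀ q ∈ I, ∃ R : ℝ, C R * u + q ∈ Mc Es ge Is gi) (hFI : F ∈ I)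
    (hF : F ∉ Mc Es ge Is gi) :
    ∃ (φ : RPoly N →ₗ[ℝ] ℝ) (x : Fin N → ℝ), (∀ v ∈ I, v ∈ Mc Es ge Is gi → 0 ≤ φ v) ∧
      φ u = 1 ∧ φ F ≤ 0 ∧ ∀ a, ∀ v ∈ I, φ (a * v) = eval x a * φ v := by
  obtain ⟨φ, χ, h1, h2, h3, h4⟩ := exists_pure_state (A := RPoly N) (V := I)
    {v : I | (v : RPoly N) ∈ Mc Es ge Is gi}
    (by intro v hv w hw; exact (Mc Es ge Is gi).add_mem hv hw)
    (by
      intro r hr v hv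
      have := Mc_nn hr hv
      rw [C_mul'] at this
      exact this)
    (by
      intro a
      obtain ⟨R, hR⟩ := Mc_arch (Is := (∅ : Finset κ)) (gi := gi) hj0 hs a
      refine ⟨R, fun v hv => ?_⟩
      have := Mc_T_mul hR hv
      rw [sub_mul, C_mul'] at this
      exact this)
    ⟨u, huI⟩ hu
    (by
      intro v
      obtain ⟨R, hR⟩ := hunit v v.2
      refine ⟨R, ?_⟩
      rw [C_mul'] at hR
      exact hR)
    ⟨F, hFI⟩ hF
  obtain ⟨ψ, hψ⟩ := LinearMap.exists_extend (p := I.restrictScalars ℝ) φ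
  have hψ' : ∀ v (hv : v ∈ I), ψ v = φ ⟨v, hv⟩ := fun v hv => by
    rw [← hψ]; rfl
  obtain ⟨x, hx⟩ := char_eval χ
  refine ⟨ψ, x, ?_, ?_, ?_, ?_⟩
  · intro v hv hm
    rw [hψ' v hv]; exact h1 _ hm
  · rw [hψ' u huI]; exact h2
  · rw [hψ' F hFI]; exact h3
  · intro a v hv
    rw [hψ' _ (I.mul_mem_left a hv), hψ' v hv, ← hx, ← h4]
    rfl

theorem state_feas {N : ℕ} {ι κ : Type} {Es : Finset ι} {ge : ι → RPoly N} {Is : Finset κ}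
    {gi : κ → RPoly N}
    (I : Ideal (RPoly N)) (u F : RPoly N) (huI : u ∈ I) (hFI : F ∈ I)
    (φ : RPoly N →ₗ[ℝ] ℝ) (x : Fin N → ℝ) (h1 : ∀ v ∈ I, v ∈ Mc Es ge Is gi → 0 ≤ φ v)
    (h2 : φ u = 1) (h3 : φ F ≤ 0) (h4 : ∀ a, ∀ v ∈ I, φ (a * v) = eval x a * φ v)
    (hux : eval x u ≠ 0) :
    ((∀ j ∈ Es, eval x (ge j) = 0) ∧ (∀ j ∈ Is, 0 ≤ eval x (gi j))) ∧ eval x F ≤ 0 := by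
  have hu0 : 0 ≤ eval x u := by
    have := h1 (u ^ 2) (I.pow_mem_of_mem huI 2 (by norm_num)) (Mc_sq u)
    rwa [sq, h4 u u huI, h2, mul_one] at this
  have hup : 0 < eval x u := lt_of_le_of_ne hu0 (Ne.symm hux)
  refine ⟨⟨?_, ?_⟩, ?_⟩
  · intro j hj
    have a1 := h1 (ge j * u) (I.mul_mem_left _ huI) (Mc_ge hj u)
    have a2 := h1 (ge j * (-u)) (I.mul_mem_left _ (I.neg_mem huI)) (Mc_ge hj (-u))
    rw [h4 _ _ huI, h2] at a1
    rw [h4 _ _ (I.neg_mem huI), map_neg, h2] at a2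
    linarith
  · intro j hj
    have a1 := h1 (gi j * u ^ 2) (I.mul_mem_left _ (I.pow_mem_of_mem huI 2 (by norm_num))) (Mc_gi hj u)
    have : gi j * u ^ 2 = (gi j * u) * u := by ring
    rw [this, h4 _ _ huI, h2, mul_one, map_mul] at a1
    exact nonneg_of_mul_nonneg_left a1 hup
  · have a1 := h4 u F hFI
    rw [mul_comm, h4 F u huI, h2, mul_one] at a1
    rw [a1]
    exact mul_nonpos_of_nonneg_of_nonpos hu0 h3

theorem sum_sub_mem {G α : Type*} [AddCommGroup G] (M : AddSubmonoid G) (s : Finset α) (f : α → G)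
    (hf : ∀ i ∈ s, f i ∈ M) (i : α) (hi : i ∈ s) : (∑ i ∈ s, f i) - f i ∈ M := by
  classical
  rw [← Finset.sum_erase_eq_sub hi]
  exact sum_mem fun j hj => hf j (Finset.mem_of_mem_erase hj)

theorem Mc_arch0 {N : ℕ} {ι κ : Type} {Es : Finset ι} {ge : ι → RPoly N} {Is : Finset κ}
    {gi : κ → RPoly N} {j0 : ι} (hj0 : j0 ∈ Es) (hs : ge j0 = (∑ i, (X i : RPoly N) ^ 2) - 1)
    (a : RPoly N) : ∃ R : ℝ, 0 ≤ R ∧ C R - a ∈ Mc Es ge Is gi := by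
  obtain ⟨R, hR⟩ := Mc_arch (Is := Is) (gi := gi) hj0 hs a
  refine ⟨R + |R|, by linarith [neg_abs_le R], ?_⟩
  have h1 : C |R| * (1 : RPoly N) ^ 2 ∈ Mc Es ge Is gi := Mc_nn (abs_nonneg R) (Mc_sq 1)
  have : C (R + |R|) - a = (C R - a) + C |R| * (1 : RPoly N) ^ 2 := by rw [C_add]; ring
  rw [this]; exact add_mem hR h1

theorem order_unit {N : ℕ} {ι κ : Type} {Es : Finset ι} {ge : ι → RPoly N} {Is : Finset κ}
    {gi : κ → RPoly N} {j0 : ι} (hj0 : j0 ∈ Es) (hs : ge j0 = (∑ i, (X i : RPoly N) ^ 2) - 1)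
    (S : Set (RPoly N)) (u : RPoly N)
    (hS : ∀ q ∈ S, (∃ j ∈ Es, q = ge j) ∨ (q ∈ Mc Es ge Is gi ∧ u - q ∈ Mc Es ge Is gi) ∨
      (∃ e y y', q = e ^ 2 * (y * y') ∧ u - e ^ 2 * (y * y) ∈ Mc Es ge Is gi ∧
        u - e ^ 2 * (y' * y') ∈ Mc Es ge Is gi)) :
    ∀ q ∈ Ideal.span S, ∃ R : ℝ, C R * u + q ∈ Mc Es ge Is gi := by
  have key : ∀ q ∈ Ideal.span S, ∀ a, ∃ R : ℝ, C R * u + a * q ∈ Mc Es ge Is gi := by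
    intro q hq
    induction hq using Submodule.span_induction with
    | mem q hq =>
      intro a
      rcases hS q hq with ⟨j, hj, rfl⟩ | ⟨hm, hum⟩ | ⟨e, y, y', rfl, h1, h2⟩
      · refine ⟨0, ?_⟩
        rw [C_0, zero_mul, zero_add, mul_comm]
        exact Mc_ge hj _
      · obtain ⟨R, hR0, hR⟩ := Mc_arch0 (Is := (∅ : Finset κ)) (gi := gi) hj0 hs (-a)
        refine ⟨R, ?_⟩
        have : C R * u + a * q = C R * (u - q) + (C R - -a) * q := by ring
        rw [this]
        exact add_mem (Mc_nn hR0 hum) (Mc_T_mul hR hm)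
      · obtain ⟨R, hR0, hR⟩ := Mc_arch0 (Is := (∅ : Finset κ)) (gi := gi) hj0 hs (a ^ 2)
        refine ⟨(1 / 2) * (1 + R), ?_⟩
        have h2' : (2 : RPoly N) * C (1/2) = 1 := by
          rw [show (2 : RPoly N) = C 2 from rfl, ← C_mul]; norm_num
        have : C ((1 / 2) * (1 + R)) * u + a * (e ^ 2 * (y * y')) =
          C (1 / 2) * ((u - e ^ 2 * (y * y)) + C R * (u - e ^ 2 * (y' * y')) +
            (e * (y + a * y')) ^ 2 + (C R - a ^ 2) * (e * y') ^ 2) := by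
          rw [C_mul, C_add, C_1]
          linear_combination (-(a * (e ^ 2 * (y * y')))) * h2'
        rw [this]
        exact Mc_nn (by norm_num) (add_mem (add_mem (add_mem h1 (Mc_nn hR0 h2)) (Mc_sq _))
          (Mc_T_mul hR (Mc_sq _)))
    | zero => intro a; exact ⟨0, by simp⟩
    | add p q _ _ hp hq =>
      intro a
      obtain ⟨R, hR⟩ := hp a
      obtain ⟨R', hR'⟩ := hq a
      refine ⟨R + R', ?_⟩
      have : C (R + R') * u + a * (p + q) = (C R * u + a * p) + (C R' * u + a * q) := by
        rw [C_add]; ring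
      rw [this]; exact add_mem hR hR'
    | smul b q _ hq =>
      intro a
      obtain ⟨R, hR⟩ := hq (a * b)
      exact ⟨R, by rwa [smul_eq_mul, ← mul_assoc]⟩
  intro q hq
  simpa using key q hq 1

theorem main_cert {N : ℕ} {ι κ : Type} (Es : Finset ι) (ge : ι → RPoly N) (Is : Finset κ)
    (gi : κ → RPoly N) (F : RPoly N) (j0 : ι) (hj0 : j0 ∈ Es)
    (hs : ge j0 = (∑ i, (X i : RPoly N) ^ 2) - 1) (Kf : Set (Fin N → ℝ))
    (hKf : Kf = {x | (∀ j ∈ Es, eval x (ge j) = 0) ∧ (∀ j ∈ Is, 0 ≤ eval x (gi j))})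
    (hcomp : IsCompact Kf) (hnn : ∀ x ∈ Kf, 0 ≤ eval x F)
    (hopt : ∀ x ∈ Kf, eval x F = 0 → OptCondsAt Es ge Is gi F x) :
    F ∈ Mc Es ge Is gi := by
  classical
  by_contra hF
  have hfin := zeros_finite Es ge Is gi F Kf hKf hcomp hopt
  obtain ⟨t, ht⟩ := hfin.exists_finset
  have ht' : ∀ x, x ∈ t ↔ x ∈ Kf ∧ eval x F = 0 := ht
  rcases t.eq_empty_or_nonempty with hte | htne
  · obtain ⟨φ, x, h1, h2, h3, h4⟩ := ideal_state (gi := gi) (Is := Is) hj0 hs ⊤ 1 F trivial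
      (by simpa using Mc_sq (Es := Es) (ge := ge) (Is := Is) (gi := gi) 1)
      (by
        intro q _
        obtain ⟨R, hR⟩ := Mc_arch (Is := Is) (gi := gi) hj0 hs (-q)
        exact ⟨R, by simpa using hR⟩) trivial hF
    obtain ⟨hx, hFx⟩ := state_feas ⊤ 1 F trivial trivial φ x h1 h2 h3 h4 (by simp)
    have hxK : x ∈ Kf := by rw [hKf]; exact hx
    have : x ∈ t := (ht' x).2 ⟨hxK, le_antisymm hFx (hnn x hxK)⟩
    simp [hte] at this
  obtain ⟨e, b, he0, he1, hesum, hbsum⟩ := exists_idem_poly t htne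
  let y : (Fin N → ℝ) → Fin N → RPoly N := fun z k => X k - C (z k)
  have hyz : ∀ z k, eval z (y z k) = 0 := fun z k => by simp [y]
  let Act : (Fin N → ℝ) → Finset κ := fun z => Is.filter fun j => eval z (gi j) = 0
  let w : (Fin N → ℝ) → RPoly N := fun z =>
    ∑ k, e z ^ 2 * (y z k * y z k) + ∑ j ∈ Act z, e z ^ 2 * gi j
  let u : RPoly N := ∑ z ∈ t, w z
  let S : Set (RPoly N) := {q | (∃ j ∈ Es, q = ge j) ∨
    (∃ z ∈ t, ∃ j ∈ Act z, q = e z ^ 2 * gi j) ∨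
    (∃ z ∈ t, ∃ k l, q = e z ^ 2 * (y z k * y z l))}
  let I : Ideal (RPoly N) := Ideal.span S
  have hIge : ∀ j ∈ Es, ge j ∈ I := fun j hj => Ideal.subset_span (Or.inl ⟨j, hj, rfl⟩)
  have hIgi : ∀ z ∈ t, ∀ j ∈ Act z, e z ^ 2 * gi j ∈ I := fun z hz j hj =>
    Ideal.subset_span (Or.inr (Or.inl ⟨z, hz, j, hj, rfl⟩))
  have hIy : ∀ z ∈ t, ∀ k l, e z ^ 2 * (y z k * y z l) ∈ I := fun z hz k l =>
    Ideal.subset_span (Or.inr (Or.inr ⟨z, hz, k, l, rfl⟩))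
  have hMgi : ∀ z, ∀ j ∈ Act z, e z ^ 2 * gi j ∈ Mc Es ge Is gi := fun z j hj => by
    rw [mul_comm]; exact Mc_gi (Finset.mem_filter.1 hj).1 _
  have hMy : ∀ z k, e z ^ 2 * (y z k * y z k) ∈ Mc Es ge Is gi := fun z k => by
    have : e z ^ 2 * (y z k * y z k) = (e z * y z k) ^ 2 := by ring
    rw [this]; exact Mc_sq _
  have hMw : ∀ z, w z ∈ Mc Es ge Is gi := fun z =>
    add_mem (sum_mem fun k _ => hMy z k) (sum_mem fun j hj => hMgi z j hj)
  have hIw : ∀ z ∈ t, w z ∈ I := fun z hz =>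
    add_mem (sum_mem fun k _ => hIy z hz k k) (sum_mem fun j hj => hIgi z hz j hj)
  have huM : u ∈ Mc Es ge Is gi := sum_mem fun z _ => hMw z
  have huI : u ∈ I := sum_mem fun z hz => hIw z hz
  have huw : ∀ z ∈ t, u - w z ∈ Mc Es ge Is gi := fun z hz =>
    sum_sub_mem _ t w (fun z _ => hMw z) z hz
  have huy : ∀ z ∈ t, ∀ k, u - e z ^ 2 * (y z k * y z k) ∈ Mc Es ge Is gi := by
    intro z hz k
    have h1 := sum_sub_mem (Mc Es ge Is gi) Finset.univ (fun k => e z ^ 2 * (y z k * y z k))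
      (fun k _ => hMy z k) k (Finset.mem_univ k)
    have h2 : ∑ j ∈ Act z, e z ^ 2 * gi j ∈ Mc Es ge Is gi := sum_mem fun j hj => hMgi z j hj
    have := add_mem (add_mem (huw z hz) h1) h2
    convert this using 1
    simp only [w]; ring
  have hugi : ∀ z ∈ t, ∀ j ∈ Act z, u - e z ^ 2 * gi j ∈ Mc Es ge Is gi := by
    intro z hz j hj
    have h1 := sum_sub_mem (Mc Es ge Is gi) (Act z) (fun j => e z ^ 2 * gi j)
      (fun j hj => hMgi z j hj) j hj
    have h2 : ∑ k, e z ^ 2 * (y z k * y z k) ∈ Mc Es ge Is gi := sum_mem fun k _ => hMy z k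
    have := add_mem (add_mem (huw z hz) h1) h2
    convert this using 1
    simp only [w]; ring
  have hunit := order_unit hj0 hs S u (Is := Is) (gi := gi) (by
    rintro q (⟨j, hj, rfl⟩ | ⟨z, hz, j, hj, rfl⟩ | ⟨z, hz, k, l, rfl⟩)
    · exact Or.inl ⟨j, hj, rfl⟩
    · exact Or.inr (Or.inl ⟨hMgi z j hj, hugi z hz j hj⟩)
    · exact Or.inr (Or.inr ⟨e z, y z k, y z l, rfl, huy z hz k, huy z hz l⟩))
  have hzf : ∀ z ∈ t, (∀ j ∈ Es, eval z (ge j) = 0) ∧ (∀ j ∈ Is, 0 ≤ eval z (gi j)) := by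
    intro z hz
    have := ((ht' z).1 hz).1
    rw [hKf] at this
    exact this
  have hdec := fun z (hz : z ∈ t) => local_decomp Es ge Is gi F z (hzf z hz).1
    ((ht' z).1 hz).2 (hopt z ((ht' z).1 hz).1 ((ht' z).1 hz).2)
  have hFI : F ∈ I := by
    have : F = ∑ z ∈ t, b z * (e z ^ 2 * F) := by
      simp only [← mul_assoc]
      rw [← Finset.sum_mul, hbsum, one_mul]
    rw [this]
    refine sum_mem fun z hz => I.mul_mem_left _ ?_
    obtain ⟨lamE, lamI, a, hFe, hc, -, -⟩ := hdec z hz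
    rw [hFe, mul_add, mul_add, Finset.mul_sum, Finset.mul_sum, Finset.mul_sum]
    refine add_mem (add_mem (sum_mem fun j hj => ?_) (sum_mem fun j hj => ?_))
      (sum_mem fun k _ => ?_)
    · rw [← mul_assoc]; exact I.mul_mem_left _ (hIge j hj)
    · by_cases h0 : eval z (gi j) = 0
      · have := hIgi z hz j (Finset.mem_filter.2 ⟨hj, h0⟩)
        have h2 : e z ^ 2 * (C (lamI j) * gi j) = C (lamI j) * (e z ^ 2 * gi j) := by ring
        rw [h2]; exact I.mul_mem_left _ this
      · rcases mul_eq_zero.1 (hc j hj).2 with h | h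
        · simp [h]
        · exact absurd h h0
    · rw [Finset.mul_sum]
      refine sum_mem fun l _ => ?_
      have h2 : e z ^ 2 * (a k l * ((X k - C (z k)) * (X l - C (z l))))
        = a k l * (e z ^ 2 * (y z k * y z l)) := by simp only [y]; ring
      rw [h2]; exact I.mul_mem_left _ (hIy z hz k l)
  obtain ⟨φ, x, h1, h2, h3, h4⟩ := ideal_state (gi := gi) (Is := Is) hj0 hs I u F huI huM hunit hFI hF
  by_cases hxt : x ∈ t
  swap
  · have hux : eval x u ≠ 0 := by
      intro hu0
      have hall : ∀ q ∈ I, eval x q = 0 := by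
        intro q hq
        have a1 := h4 u q hq
        rw [mul_comm, h4 q u huI, h2, mul_one, hu0, zero_mul] at a1
        exact a1
      have hex : ∃ z ∈ t, eval x (e z) ≠ 0 := by
        by_contra hno
        push Not at hno
        have := congrArg (eval x) hesum
        rw [map_sum, Finset.sum_eq_zero hno, map_one] at this
        exact zero_ne_one this
      obtain ⟨z, hz, hez⟩ := hex
      apply hxt
      have : x = z := by
        funext k
        have := hall _ (hIy z hz k k)
        simp only [map_mul, map_pow, mul_eq_zero, pow_eq_zero_iff (two_ne_zero), hez, false_or,
          or_self, y, map_sub, eval_X, eval_C] at this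
        linarith
      rw [this]; exact hz
    obtain ⟨hx, hFx⟩ := state_feas I u F huI hFI φ x h1 h2 h3 h4 hux
    have hxK : x ∈ Kf := by rw [hKf]; exact hx
    exact hxt ((ht' x).2 ⟨hxK, le_antisymm hFx (hnn x hxK)⟩)
  -- the state is concentrated at a zero
  obtain ⟨lamE, lamI, a, hFe, hc, hsc, hso⟩ := hdec x hxt
  let Φ : Fin N → Fin N → ℝ := fun k l => φ (e x ^ 2 * (y x k * y x l))
  let μ : κ → ℝ := fun j => φ (e x ^ 2 * gi j)
  have hge0 : ∀ j ∈ Es, φ (ge j) = 0 := by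
    intro j hj
    have a1 := h1 (ge j * 1) (I.mul_mem_right _ (hIge j hj)) (Mc_ge hj 1)
    have a2 := h1 (ge j * (-1)) (I.mul_mem_right _ (hIge j hj)) (Mc_ge hj (-1))
    rw [mul_one] at a1
    rw [mul_neg, mul_one, map_neg] at a2
    linarith
  have hloc : ∀ v ∈ I, φ v = φ (e x ^ 2 * v) := by
    intro v hv
    rw [h4 _ v hv, map_pow, he1 x hxt]; simp
  have hφF : φ F = ∑ j ∈ Is, lamI j * μ j + ∑ k, ∑ l, eval x (a k l) * Φ k l := by
    rw [hloc F hFI]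
    conv_lhs => rw [hFe]
    rw [mul_add, mul_add, Finset.mul_sum, Finset.mul_sum, Finset.mul_sum, map_add, map_add,
      map_sum, map_sum, map_sum]
    rw [Finset.sum_eq_zero (s := Es) (fun j hj => by
      rw [← mul_assoc, h4 _ _ (hIge j hj), hge0 j hj, mul_zero]), zero_add]
    congr 1
    · refine Finset.sum_congr rfl fun j _ => ?_
      have : e x ^ 2 * (C (lamI j) * gi j) = lamI j • (e x ^ 2 * gi j) := by
        rw [← C_mul']; ring
      rw [this, map_smul, smul_eq_mul]
    · refine Finset.sum_congr rfl fun k _ => ?_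
      rw [Finset.mul_sum, map_sum]
      refine Finset.sum_congr rfl fun l _ => ?_
      rw [← h4 _ _ (hIy x hxt k l)]
      congr 1
      simp only [y]; ring
  have hμ : ∀ j ∈ Act x, 0 ≤ μ j := fun j hj => h1 _ (hIgi x hxt j hj) (hMgi x j hj)
  have hG : ∀ g : RPoly N, eval x g = 0 → e x ^ 2 * g ∈ I → ∀ k,
      ∑ l, eval x (pderiv l g) * Φ k l = 0 := by
    intro g hg hgI k
    obtain ⟨d, hd, hdd⟩ := taylor1 g x
    have a1 := h4 (y x k) _ hgI
    rw [hyz, zero_mul] at a1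
    rw [← a1]
    have : y x k * (e x ^ 2 * g) = ∑ l, d l * (e x ^ 2 * (y x k * y x l)) := by
      conv_lhs => rw [hd, hg, C_0, zero_add]
      rw [Finset.mul_sum, Finset.mul_sum]
      refine Finset.sum_congr rfl fun l _ => ?_
      simp only [y]; ring
    rw [this, map_sum]
    refine Finset.sum_congr rfl fun l _ => ?_
    rw [h4 _ _ (hIy x hxt k l), hdd]
  obtain ⟨hp1, hp2⟩ := psd_pair Φ
    (fun k l => by simp only [Φ]; rw [mul_comm (y x k)])
    (by
      intro v
      have hexp : (e x * ∑ k, C (v k) * y x k) ^ 2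
          = ∑ k, ∑ l, (v k * v l) • (e x ^ 2 * (y x k * y x l)) := by
        rw [mul_pow, sq (∑ k, C (v k) * y x k), Finset.sum_mul_sum, Finset.mul_sum]
        refine Finset.sum_congr rfl fun k _ => ?_
        rw [Finset.mul_sum]
        refine Finset.sum_congr rfl fun l _ => ?_
        rw [← C_mul', C_mul]; ring
      have a1 := h1 ((e x * ∑ k, C (v k) * y x k) ^ 2)
        (by
          rw [hexp]
          refine sum_mem fun k _ => sum_mem fun l _ => ?_
          rw [← C_mul']
          exact I.mul_mem_left _ (hIy x hxt k l)) (Mc_sq _)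
      rw [hexp] at a1
      simpa only [map_sum, map_smul, smul_eq_mul] using a1)
    {g | (∃ j ∈ Es, g = fun i => eval x (pderiv i (ge j))) ∨
      (∃ j ∈ Act x, g = fun i => eval x (pderiv i (gi j)))}
    (by
      rintro g (⟨j, hj, rfl⟩ | ⟨j, hj, rfl⟩) k
      · exact hG (ge j) ((hzf x hxt).1 j hj) (I.mul_mem_left _ (hIge j hj)) k
      · exact hG (gi j) (Finset.mem_filter.1 hj).2 (hIgi x hxt j hj) k)
    (fun k l => eval x (a k l))
    (by
      intro v hv hg
      refine hso v hv (fun j hj => ?_) (fun j hj h0 => ?_)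
      · exact hg _ (Or.inl ⟨j, hj, rfl⟩)
      · exact hg _ (Or.inr ⟨j, Finset.mem_filter.2 ⟨hj, h0⟩, rfl⟩))
  have hterm : ∀ j ∈ Is, 0 ≤ lamI j * μ j := by
    intro j hj
    by_cases h0 : eval x (gi j) = 0
    · exact mul_nonneg (hc j hj).1 (hμ j (Finset.mem_filter.2 ⟨hj, h0⟩))
    · rcases mul_eq_zero.1 (hc j hj).2 with h | h
      · simp [h]
      · exact absurd h h0
  have hs1 := Finset.sum_nonneg hterm
  have hz1 : ∑ j ∈ Is, lamI j * μ j = 0 := by linarith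
  have hz2 : ∑ k, ∑ l, eval x (a k l) * Φ k l = 0 := by linarith
  have hΦ0 := hp2 hz2
  rw [Finset.sum_eq_zero_iff_of_nonneg hterm] at hz1
  have hμ0 : ∀ j ∈ Act x, μ j = 0 := by
    intro j hj
    obtain ⟨hj1, hj2⟩ := Finset.mem_filter.1 hj
    have a1 := hsc j hj1
    rw [hj2, add_zero] at a1
    rcases mul_eq_zero.1 (hz1 j hj1) with h | h
    · exact absurd h a1.ne'
    · exact h
  have hu0 : φ u = 0 := by
    simp only [u, map_sum]
    refine Finset.sum_eq_zero fun z hz => ?_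
    by_cases hzx : z = x
    · subst hzx
      simp only [w, map_add, map_sum]
      rw [Finset.sum_eq_zero (fun k _ => hΦ0 k k), Finset.sum_eq_zero (fun j hj => hμ0 j hj),
        add_zero]
    · rw [hloc _ (hIw z hz)]
      obtain ⟨d, hd, -⟩ := taylor1 (e z) x
      rw [he0 z hz x hxt (Ne.symm hzx), C_0, zero_add] at hd
      have hwz : w z = e z ^ 2 * (∑ k, y z k * y z k + ∑ j ∈ Act z, gi j) := by
        simp only [w]; rw [mul_add, Finset.mul_sum, Finset.mul_sum]
      generalize (∑ k, y z k * y z k + ∑ j ∈ Act z, gi j) = r at hwz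
      have : e x ^ 2 * w z = ∑ k, ∑ l, (d k * d l * r) * (e x ^ 2 * (y x k * y x l)) := by
        rw [hwz, hd, sq (∑ l, _), Finset.sum_mul_sum, Finset.sum_mul, Finset.mul_sum]
        refine Finset.sum_congr rfl fun k _ => ?_
        rw [Finset.sum_mul, Finset.mul_sum]
        refine Finset.sum_congr rfl fun l _ => ?_
        simp only [y]; ring
      rw [this, map_sum]
      refine Finset.sum_eq_zero fun k _ => ?_
      rw [map_sum]
      refine Finset.sum_eq_zero fun l _ => ?_
      rw [h4 _ _ (hIy x hxt k l)]
      have := hΦ0 k l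
      simp only [Φ] at this
      rw [this, mul_zero]
  rw [hu0] at h2
  exact zero_ne_one h2

theorem eval_homogAux {n : ℕ} (ℓ : ℕ) (p : RPoly n) (u : Fin (n + 1) → ℝ) :
    eval u (homogAux ℓ p) =
      ∑ α ∈ p.support, p.coeff α * (u 0 ^ (ℓ - mdeg α) * ∏ i, u (Fin.succ i) ^ α i) := by
  unfold homogAux
  rw [map_sum]
  refine Finset.sum_congr rfl fun α _ => ?_
  rw [eval_monomial, Finsupp.prod_add_index' (by simp) (by intros; rw [pow_add]),
    Finsupp.prod_single_index (by simp), Finsupp.prod_mapDomain_index (by simp)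
    (by intros; rw [pow_add]), Finsupp.prod_fintype _ _ (by simp)]

theorem mdeg_le {n : ℕ} (p : RPoly n) (α : Fin n →₀ ℕ) (h : α ∈ p.support) :
    mdeg α ≤ p.totalDegree := by
  have := le_totalDegree h
  rwa [Finsupp.sum_fintype _ _ (by simp)] at this

theorem homog_scale {n : ℕ} (p : RPoly n) (t : ℝ) (u : Fin (n + 1) → ℝ) :
    eval (t • u) (homogenize p) = t ^ p.totalDegree * eval u (homogenize p) := by
  unfold homogenize
  rw [eval_homogAux, eval_homogAux, Finset.mul_sum]
  refine Finset.sum_congr rfl fun α hα => ?_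
  simp only [Pi.smul_apply, smul_eq_mul, mul_pow, Finset.prod_mul_distrib]
  rw [Finset.prod_pow_eq_pow_sum]
  have h := mdeg_le p α hα
  have h2 : t ^ p.totalDegree = t ^ (p.totalDegree - mdeg α) * t ^ (∑ i, α i) := by
    rw [← pow_add]; congr 1; unfold mdeg at *; omega
  rw [h2]; ring

theorem homog_cons {n : ℕ} (p : RPoly n) (x : Fin n → ℝ) :
    eval (Fin.cons 1 x : Fin (n + 1) → ℝ) (homogenize p) = eval x p := by
  unfold homogenize
  rw [eval_homogAux, eval_eq']
  refine Finset.sum_congr rfl fun α _ => ?_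
  simp

theorem eq_smul_cons {n : ℕ} (u : Fin (n + 1) → ℝ) (h : u 0 ≠ 0) :
    u = u 0 • (Fin.cons 1 ((u 0)⁻¹ • Fin.tail u) : Fin (n + 1) → ℝ) := by
  funext i
  refine Fin.cases ?_ (fun i => ?_) i
  · simp
  · simp [Fin.tail, h]

theorem F_nonneg {n d : ℕ} (E I : Finset ℕ) (c : ℕ → RPoly n)
    (f : RPoly n) (hfd : f.totalDegree = d) (hde : Even d)
    (hce : ∀ j ∈ I, Even (c j).totalDegree)
    (hcl : ClosedAtInfinity E I c)
    (fmin : ℝ) (hfmin : IsGLB {v : ℝ | ∃ x ∈ Kset E I c, v = eval x f} fmin)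
    (u : Fin (n + 1) → ℝ) (h1 : ∀ j ∈ E, eval u (homogenize (c j)) = 0)
    (h2 : ∀ j ∈ I, 0 ≤ eval u (homogenize (c j))) (h3 : (∑ i, (u i) ^ 2) = 1) :
    0 ≤ eval u (homogenize f - C fmin * (X 0 : RPoly (n + 1)) ^ d) := by
  have pos : ∀ u ∈ Khom E I c ∩ {x | 0 < x 0},
      0 ≤ eval u (homogenize f - C fmin * (X 0 : RPoly (n + 1)) ^ d) := by
    rintro u ⟨⟨h1, h2, h3, -⟩, h0⟩
    have h0 : 0 < u 0 := h0
    let x : Fin n → ℝ := (u 0)⁻¹ • Fin.tail u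
    have hh : ∀ p : RPoly n, eval u (homogenize p) = u 0 ^ p.totalDegree * eval x p := by
      intro p
      conv_lhs => rw [eq_smul_cons u h0.ne']
      rw [homog_scale, homog_cons]
    have hx : x ∈ Kset E I c := by
      refine ⟨fun j hj => ?_, fun j hj => ?_⟩
      · have := h1 j hj
        rw [hh] at this
        exact (mul_eq_zero.1 this).resolve_left (pow_pos h0 _).ne'
      · have := h2 j hj
        rw [hh] at this
        exact nonneg_of_mul_nonneg_right this (pow_pos h0 _)
    have hf := hfmin.1 ⟨x, hx, rfl⟩
    rw [map_sub, hh f, hfd]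
    simp only [map_mul, map_pow, eval_X, eval_C]
    have := mul_nonneg (pow_pos h0 d).le (sub_nonneg.2 hf)
    linarith
  have nn : ∀ u ∈ Khom E I c, 0 ≤ eval u (homogenize f - C fmin * (X 0 : RPoly (n + 1)) ^ d) := by
    intro u hu
    rw [hcl] at hu
    have hcl2 : IsClosed {u : Fin (n + 1) → ℝ |
        0 ≤ eval u (homogenize f - C fmin * (X 0 : RPoly (n + 1)) ^ d)} :=
      isClosed_le continuous_const (continuous_eval _)
    exact closure_minimal (fun u hu => pos u hu) hcl2 hu
  rcases le_total 0 (u 0) with h0 | h0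
  · exact nn u ⟨h1, h2, h3, h0⟩
  · have hm := nn ((-1 : ℝ) • u) ⟨fun j hj => by rw [homog_scale, h1 j hj, mul_zero],
      fun j hj => by rw [homog_scale, (hce j hj).neg_one_pow, one_mul]; exact h2 j hj,
      by simpa using h3, by simpa using h0⟩
    rw [map_sub, homog_scale, hfd, hde.neg_one_pow] at hm
    rw [map_sub]
    simpa [hde.neg_pow] using hm

theorem F_mem {n d : ℕ} (E I : Finset ℕ) (c : ℕ → RPoly n)
    (f : RPoly n) (hfd : f.totalDegree = d) (hde : Even d)
    (hce : ∀ j ∈ I, Even (c j).totalDegree)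
    (hcl : ClosedAtInfinity E I c)
    (fmin : ℝ) (hfmin : IsGLB {v : ℝ | ∃ x ∈ Kset E I c, v = eval x f} fmin)
    (hopt : ∀ u : Fin (n + 1) → ℝ,
      ((∀ j ∈ E, eval u (homogenize (c j)) = 0) ∧
        (∀ j ∈ I, 0 ≤ eval u (homogenize (c j))) ∧ (∑ i, (u i) ^ 2) = 1 ∧
        (∀ x : Fin (n + 1) → ℝ,
          ((∀ j ∈ E, eval x (homogenize (c j)) = 0) ∧
            (∀ j ∈ I, 0 ≤ eval x (homogenize (c j))) ∧ (∑ i, (x i) ^ 2) = 1) →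
          eval u (homogenize f - C fmin * (X 0 : RPoly (n + 1)) ^ d)
            ≤ eval x (homogenize f - C fmin * (X 0 : RPoly (n + 1)) ^ d))) →
      OptCondsAt (OS E) (gEqH c) I (fun j => homogenize (c j))
        (homogenize f - C fmin * (X 0 : RPoly (n + 1)) ^ d) u) :
    homogenize f - C fmin * (X 0 : RPoly (n + 1)) ^ d ∈
      Mc (OS E) (gEqH c) I (fun j => homogenize (c j)) := by
  have hiff : ∀ x : Fin (n + 1) → ℝ, ((∀ j ∈ OS E, eval x (gEqH c j) = 0) ∧
      (∀ j ∈ I, 0 ≤ eval x (homogenize (c j)))) ↔ ((∀ j ∈ E, eval x (homogenize (c j)) = 0) ∧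
            (∀ j ∈ I, 0 ≤ eval x (homogenize (c j))) ∧ (∑ i, (x i) ^ 2) = 1) := by
    intro x
    simp only [OS, Finset.mem_insert, Finset.mem_image, forall_eq_or_imp, forall_exists_index,
      and_imp, forall_apply_eq_imp_iff₂, gEqH, Option.elim, sphereP, map_sub, map_sum, map_pow,
      eval_X, map_one, sub_eq_zero]
    tauto
  refine main_cert (OS E) (gEqH c) I (fun j => homogenize (c j)) _ none (by simp [OS]) rfl _ rfl
    ?_ ?_ ?_
  · have hcl2 : IsClosed {x : Fin (n + 1) → ℝ | (∀ j ∈ OS E, eval x (gEqH c j) = 0) ∧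
      (∀ j ∈ I, 0 ≤ eval x (homogenize (c j)))} := by
      simp only [Set.ofPred_and, Set.ofPred_forall]
      refine IsClosed.inter ?_ ?_
      · exact isClosed_iInter fun j => isClosed_iInter fun _ =>
          isClosed_eq (continuous_eval _) continuous_const
      · exact isClosed_iInter fun j => isClosed_iInter fun _ =>
          isClosed_le continuous_const (continuous_eval _)
    refine (isCompact_closedBall (0 : Fin (n + 1) → ℝ) 1).of_isClosed_subset hcl2 ?_
    intro x hx
    have h := ((hiff x).1 hx).2.2
    rw [mem_closedBall_zero_iff, pi_norm_le_iff_of_nonneg zero_le_one]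
    intro i
    have : x i ^ 2 ≤ 1 := by
      rw [← h]
      exact Finset.single_le_sum (f := fun i => x i ^ 2) (fun _ _ => sq_nonneg _) (Finset.mem_univ i)
    rw [Real.norm_eq_abs]
    exact abs_le_one_iff_mul_self_le_one.2 (by nlinarith)
  · intro x hx
    obtain ⟨a1, a2, a3⟩ := (hiff x).1 hx
    exact F_nonneg E I c f hfd hde hce hcl fmin hfmin x a1 a2 a3
  · intro x hx h0
    obtain ⟨a1, a2, a3⟩ := (hiff x).1 hx
    refine hopt x ⟨a1, a2, a3, fun v hv => ?_⟩
    rw [h0]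
    exact F_nonneg E I c f hfd hde hce hcl fmin hfmin v hv.1 hv.2.1 hv.2.2

/-- The polynomial `1 + ‖x‖²`. -/
noncomputable def thetaP (n : ℕ) : RPoly n := 1 + ∑ i, (X i : RPoly n) ^ 2

theorem thetaP_deg (n : ℕ) : (thetaP n).totalDegree ≤ 2 := by
  unfold thetaP
  refine (totalDegree_add _ _).trans (max_le (by simp) ?_)
  refine totalDegree_finsetSum_le fun i _ => ?_
  rw [totalDegree_X_pow]

theorem dehom {n : ℕ} (p : RPoly (n + 1)) (M : ℕ) (hM : p.totalDegree ≤ M) :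
    ∃ A B : RPoly n, A.totalDegree ≤ M ∧ (B = 0 ∨ B.totalDegree + 1 ≤ M) ∧
      ∀ (x : Fin n → ℝ) (s : ℝ), s ^ 2 = eval x (thetaP n) → s ≠ 0 →
        s ^ M * eval (s⁻¹ • (Fin.cons 1 x : Fin (n + 1) → ℝ)) p = eval x A + s * eval x B := by
  rw [p.as_sum]
  refine Finset.sum_induction (fun α => monomial α (p.coeff α)) (fun q : RPoly (n + 1) =>
    ∃ A B : RPoly n, A.totalDegree ≤ M ∧ (B = 0 ∨ B.totalDegree + 1 ≤ M) ∧
      ∀ (x : Fin n → ℝ) (s : ℝ), s ^ 2 = eval x (thetaP n) → s ≠ 0 →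
        s ^ M * eval (s⁻¹ • (Fin.cons 1 x : Fin (n + 1) → ℝ)) q = eval x A + s * eval x B)
    ?_ ?_ ?_
  · rintro q q' ⟨A, B, hA, hB, h⟩ ⟨A', B', hA', hB', h'⟩
    refine ⟨A + A', B + B', (totalDegree_add _ _).trans (max_le hA hA'), ?_, ?_⟩
    · rcases hB with rfl | hB
      · simpa using hB'
      · rcases hB' with rfl | hB'
        · right; simpa using hB
        · right
          have := totalDegree_add B B'
          have h2 : max B.totalDegree B'.totalDegree + 1 ≤ M := by omega
          omega
    · intro x s hs h0
      rw [map_add, mul_add, h x s hs h0, h' x s hs h0, map_add, map_add]; ring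
  · exact ⟨0, 0, by simp, Or.inl rfl, by simp⟩
  · intro α hα
    have hm : mdeg α ≤ M := (mdeg_le p α hα).trans hM
    let r : RPoly n := C (p.coeff α) * ∏ i, X i ^ α (Fin.succ i)
    have hmd : mdeg α = α 0 + ∑ i : Fin n, α (Fin.succ i) := Fin.sum_univ_succ _
    have hr : r.totalDegree ≤ mdeg α := by
      refine (totalDegree_mul _ _).trans ?_
      rw [totalDegree_C, zero_add]
      refine (totalDegree_finsetProd _ _).trans ?_
      simp only [totalDegree_X_pow]
      omega
    have hev : ∀ (x : Fin n → ℝ) (s : ℝ), s ≠ 0 →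
        s ^ M * eval (s⁻¹ • (Fin.cons 1 x : Fin (n + 1) → ℝ)) (monomial α (p.coeff α))
          = s ^ (M - mdeg α) * eval x r := by
      intro x s h0
      rw [eval_monomial, Finsupp.prod_fintype _ _ (by simp)]
      simp only [Pi.smul_apply, smul_eq_mul, mul_pow, Finset.prod_mul_distrib]
      rw [Finset.prod_pow_eq_pow_sum, Fin.prod_univ_succ]
      simp only [Fin.cons_zero, Fin.cons_succ, one_pow, one_mul, r, map_mul, eval_C, map_prod,
        map_pow, eval_X]
      have : s ^ M = s ^ (M - mdeg α) * s ^ (∑ i, α i) := by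
        rw [← pow_add]; congr 1; unfold mdeg at *; omega
      rw [this, inv_pow]
      have h1 : s ^ (∑ i, α i) ≠ 0 := pow_ne_zero _ h0
      field_simp
    have hth : ∀ q, ((thetaP n) ^ q * r).totalDegree ≤ 2 * q + mdeg α := by
      intro q
      refine (totalDegree_mul _ _).trans (add_le_add ?_ hr)
      refine (totalDegree_pow _ _).trans ?_
      have := Nat.mul_le_mul_left q (thetaP_deg n)
      omega
    rcases Nat.even_or_odd' (M - mdeg α) with ⟨q, hq | hq⟩
    · refine ⟨thetaP n ^ q * r, 0, (hth q).trans (by omega), Or.inl rfl, ?_⟩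
      intro x s hs h0
      rw [hev x s h0, hq, pow_mul, hs]; simp
    · refine ⟨0, thetaP n ^ q * r, by simp, Or.inr ?_, ?_⟩
      · have := hth q; omega
      · intro x s hs h0
        rw [hev x s h0, hq, pow_succ, pow_mul, hs]; simp; ring

theorem IsSOS_zero {n : ℕ} : IsSOS (0 : RPoly n) := ⟨[], by simp⟩

theorem IsSOS_sq {n : ℕ} (a : RPoly n) : IsSOS (a ^ 2) := ⟨[a], by simp⟩

theorem IsSOS_add {n : ℕ} {p q : RPoly n} (hp : IsSOS p) (hq : IsSOS q) : IsSOS (p + q) := by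
  obtain ⟨L, rfl⟩ := hp
  obtain ⟨L', rfl⟩ := hq
  exact ⟨L ++ L', by simp⟩

theorem IsSOS_theta {n : ℕ} (A B : RPoly n) : IsSOS (A ^ 2 + thetaP n * B ^ 2) := by
  refine IsSOS_add (IsSOS_sq A) ?_
  have : thetaP n * B ^ 2 = B ^ 2 + ∑ i, (X i * B) ^ 2 := by
    unfold thetaP
    rw [add_mul, one_mul, Finset.sum_mul]
    simp only [mul_pow]
  rw [this]
  refine IsSOS_add (IsSOS_sq B) ?_
  exact Finset.sum_induction _ IsSOS (fun _ _ => IsSOS_add) IsSOS_zero (fun i _ => IsSOS_sq _)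

theorem deg_theta {n : ℕ} (A B : RPoly n) (M : ℕ) (hA : A.totalDegree ≤ M)
    (hB : B = 0 ∨ B.totalDegree + 1 ≤ M) : (A ^ 2 + thetaP n * B ^ 2).totalDegree ≤ 2 * M := by
  refine (totalDegree_add _ _).trans (max_le ?_ ?_)
  · exact (totalDegree_pow _ _).trans (by omega)
  · rcases hB with rfl | hB
    · simp
    · refine (totalDegree_mul _ _).trans ?_
      have h1 := totalDegree_pow B 2
      have h2 := thetaP_deg n
      omega

theorem QMod_add {n : ℕ} {S : Finset ℕ} {g : ℕ → RPoly n} {k : ℕ} {p q : RPoly n}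
    (hp : p ∈ QModDeg S g k) (hq : q ∈ QModDeg S g k) : p + q ∈ QModDeg S g k := by
  obtain ⟨s0, s, h1, h2, h3, rfl⟩ := hp
  obtain ⟨s0', s', h1', h2', h3', rfl⟩ := hq
  refine ⟨s0 + s0', fun j => s j + s' j, IsSOS_add h1 h1',
    (totalDegree_add _ _).trans (max_le h2 h2'), fun j hj => ⟨IsSOS_add (h3 j hj).1 (h3' j hj).1, ?_⟩, ?_⟩
  · change (s j + s' j).totalDegree + (g j).totalDegree ≤ k
    have a1 := (h3 j hj).2
    have a2 := (h3' j hj).2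
    have := totalDegree_add (s j) (s' j)
    have h2 : max (s j).totalDegree (s' j).totalDegree + (g j).totalDegree ≤ k := by omega
    omega
  · simp only [mul_add, Finset.sum_add_distrib]; ring

theorem QMod_sos {n : ℕ} {S : Finset ℕ} {g : ℕ → RPoly n} {k : ℕ}
    (hk : ∀ j ∈ S, (g j).totalDegree ≤ k) {p : RPoly n} (hp : IsSOS p) (hd : p.totalDegree ≤ k) :
    p ∈ QModDeg S g k :=
  ⟨p, fun _ => 0, hp, hd, fun j hj => ⟨IsSOS_zero, by simpa using hk j hj⟩, by simp⟩

theorem QMod_gi {n : ℕ} {S : Finset ℕ} {g : ℕ → RPoly n} {k : ℕ}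
    (hk : ∀ j ∈ S, (g j).totalDegree ≤ k) {p : RPoly n} (hp : IsSOS p) {j : ℕ} (hj : j ∈ S)
    (hd : p.totalDegree + (g j).totalDegree ≤ k) :
    g j * p ∈ QModDeg S g k := by
  refine ⟨0, fun i => if i = j then p else 0, IsSOS_zero, by simp, fun i hi => ?_, ?_⟩
  · by_cases h : i = j
    · subst h; simpa using ⟨hp, hd⟩
    · simpa [h] using ⟨IsSOS_zero, hk i hi⟩
  · simp [hj]

theorem Ideal_add {n : ℕ} {S : Finset ℕ} {g : ℕ → RPoly n} {k : ℕ} {p q : RPoly n}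
    (hp : p ∈ IdealDeg S g k) (hq : q ∈ IdealDeg S g k) : p + q ∈ IdealDeg S g k := by
  obtain ⟨s, h3, rfl⟩ := hp
  obtain ⟨s', h3', rfl⟩ := hq
  refine ⟨fun j => s j + s' j, fun j hj => ?_, ?_⟩
  · change (s j + s' j).totalDegree + (g j).totalDegree ≤ k
    have a1 := (h3 j hj)
    have a2 := (h3' j hj)
    have := totalDegree_add (s j) (s' j)
    have h2 : max (s j).totalDegree (s' j).totalDegree + (g j).totalDegree ≤ k := by omega
    omega
  · simp only [mul_add, Finset.sum_add_distrib]

theorem Ideal_zero {n : ℕ} {S : Finset ℕ} {g : ℕ → RPoly n} {k : ℕ}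
    (hk : ∀ j ∈ S, (g j).totalDegree ≤ k) : (0 : RPoly n) ∈ IdealDeg S g k :=
  ⟨fun _ => 0, fun j hj => by simpa using hk j hj, by simp⟩

theorem Ideal_ge {n : ℕ} {S : Finset ℕ} {g : ℕ → RPoly n} {k : ℕ}
    (hk : ∀ j ∈ S, (g j).totalDegree ≤ k) {p : RPoly n} {j : ℕ} (hj : j ∈ S)
    (hd : p.totalDegree + (g j).totalDegree ≤ k) :
    g j * p ∈ IdealDeg S g k := by
  refine ⟨fun i => if i = j then p else 0, fun i hi => ?_, ?_⟩
  · by_cases h : i = j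
    · subst h; simpa using hd
    · simpa [h] using hk i hi
  · simp [hj]

theorem dehom_cert {n d : ℕ} (hde : Even d) (E I : Finset ℕ) (c : ℕ → RPoly n)
    (hce : ∀ j ∈ I, Even (c j).totalDegree) (p : RPoly (n + 1))
    (hp : p ∈ Mc (OS E) (gEqH c) I (fun j => homogenize (c j))) :
    ∃ k0 : ℕ, ∀ k, k0 ≤ k → ∃ p1 ∈ IdealDeg E c (2 * k + d), ∃ p2 ∈ QModDeg I c (2 * k + d),
      ∃ R : RPoly n, ∀ (x : Fin n → ℝ) (s : ℝ), s ^ 2 = eval x (thetaP n) → s ≠ 0 →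
        s ^ (2 * k + d) * eval (s⁻¹ • (Fin.cons 1 x : Fin (n + 1) → ℝ)) p
          = eval x (p1 + p2) + s * eval x R := by
  obtain ⟨d', hd'⟩ := hde
  let Kb : ℕ := ∑ j ∈ E, (c j).totalDegree + ∑ j ∈ I, (c j).totalDegree
  have hKE : ∀ k, Kb ≤ k → ∀ j ∈ E, (c j).totalDegree ≤ 2 * k + d := by
    intro k hk j hj
    have := Finset.single_le_sum (f := fun j => (c j).totalDegree) (fun _ _ => Nat.zero_le _) hj
    simp only [Kb] at hk
    omega
  have hKI : ∀ k, Kb ≤ k → ∀ j ∈ I, (c j).totalDegree ≤ k := by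
    intro k hk j hj
    have := Finset.single_le_sum (f := fun j => (c j).totalDegree) (fun _ _ => Nat.zero_le _) hj
    simp only [Kb] at hk
    omega
  have hKI2 : ∀ k, Kb ≤ k → ∀ j ∈ I, (c j).totalDegree ≤ 2 * k + d := by
    intro k hk j hj
    have := hKI k hk j hj
    omega
  have hKE2 : ∀ k, Kb ≤ k → ∀ j ∈ E, (c j).totalDegree ≤ k := by
    intro k hk j hj
    have := Finset.single_le_sum (f := fun j => (c j).totalDegree) (fun _ _ => Nat.zero_le _) hj
    simp only [Kb] at hk
    omega
  have hh : ∀ (q : RPoly n) (x : Fin n → ℝ) (s : ℝ),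
      eval (s⁻¹ • (Fin.cons 1 x : Fin (n + 1) → ℝ)) (homogenize q)
        = s⁻¹ ^ q.totalDegree * eval x q := fun q x s => by
    rw [homog_scale, homog_cons]
  unfold Mc at hp
  induction hp using AddSubmonoid.closure_induction with
  | mem p hp =>
    rcases hp with ⟨a, rfl⟩ | ⟨j, hj, a, rfl⟩ | ⟨j, hj, a, rfl⟩
    · refine ⟨Kb + a.totalDegree, fun k hk => ?_⟩
      obtain ⟨A, B, hA, hB, hAB⟩ := dehom a (k + d') (by omega)
      refine ⟨0, Ideal_zero (hKE k (by omega)), A ^ 2 + thetaP n * B ^ 2,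
        QMod_sos (hKI2 k (by omega)) (IsSOS_theta A B)
          ((deg_theta A B _ hA hB).trans (by omega)), 2 * A * B, fun x s hs h0 => ?_⟩
      have e1 : s ^ (2 * k + d) = (s ^ (k + d')) ^ 2 := by rw [← pow_mul]; congr 1; omega
      rw [map_pow, e1, ← mul_pow, hAB x s hs h0]
      simp only [map_add, map_mul, map_pow, map_zero, zero_add, ← hs, map_ofNat]
      ring
    · obtain ⟨r, hr⟩ := hce j hj
      refine ⟨Kb + a.totalDegree, fun k hk => ?_⟩
      have hjk := hKI Kb le_rfl j hj
      obtain ⟨A, B, hA, hB, hAB⟩ := dehom a (k + d' - r) (by omega)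
      refine ⟨0, Ideal_zero (hKE k (by omega)), c j * (A ^ 2 + thetaP n * B ^ 2),
        QMod_gi (hKI2 k (by omega)) (IsSOS_theta A B) hj ?_, c j * (2 * A * B), fun x s hs h0 => ?_⟩
      · have := deg_theta A B _ hA hB
        omega
      have e1 : s ^ (2 * k + d) = s ^ (c j).totalDegree * (s ^ (k + d' - r)) ^ 2 := by
        rw [← pow_mul, ← pow_add]; congr 1; omega
      have e2 : s ^ (c j).totalDegree * s⁻¹ ^ (c j).totalDegree = 1 := by
        rw [← mul_pow, mul_inv_cancel₀ h0, one_pow]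
      have e3 : s ^ (2 * k + d) * eval (s⁻¹ • (Fin.cons 1 x : Fin (n + 1) → ℝ))
          (homogenize (c j) * a ^ 2) = eval x (c j) * (s ^ (k + d' - r) *
            eval (s⁻¹ • (Fin.cons 1 x : Fin (n + 1) → ℝ)) a) ^ 2 := by
        rw [map_mul, hh, e1, map_pow]
        linear_combination (eval x (c j) * (s ^ (k + d' - r) *
            eval (s⁻¹ • (Fin.cons 1 x : Fin (n + 1) → ℝ)) a) ^ 2) * e2
      rw [e3, hAB x s hs h0]
      simp only [map_add, map_mul, map_pow, map_zero, zero_add, ← hs, map_ofNat]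
      ring
    · rcases j with _ | j
      · refine ⟨Kb, fun k hk => ⟨0, Ideal_zero (hKE k hk), 0,
          QMod_sos (hKI2 k hk) IsSOS_zero (by simp), 0, fun x s hs h0 => ?_⟩⟩
        have e1 : eval (s⁻¹ • (Fin.cons 1 x : Fin (n + 1) → ℝ)) (gEqH c none) = 0 := by
          simp only [gEqH, Option.elim, sphereP, map_sub, map_sum, map_pow, eval_X, map_one,
            Pi.smul_apply, smul_eq_mul, mul_pow]
          rw [← Finset.mul_sum, Fin.sum_univ_succ]
          simp only [Fin.cons_zero, Fin.cons_succ]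
          simp only [thetaP, map_add, map_one, map_sum, map_pow, eval_X] at hs
          rw [one_pow, ← hs, inv_pow, inv_mul_cancel₀ (pow_ne_zero 2 h0), sub_self]
        rw [map_mul, e1]; simp
      · have hj : j ∈ E := by simpa [OS] using hj
        refine ⟨Kb + a.totalDegree, fun k hk => ?_⟩
        have hjk := hKE2 k (by omega) j hj
        obtain ⟨A, B, hA, hB, hAB⟩ := dehom a (2 * k + d - (c j).totalDegree) (by omega)
        refine ⟨c j * A, Ideal_ge (hKE k (by omega)) hj (by omega), 0,
          QMod_sos (hKI2 k (by omega)) IsSOS_zero (by simp), c j * B, fun x s hs h0 => ?_⟩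
        have e1 : s ^ (2 * k + d) = s ^ (c j).totalDegree * s ^ (2 * k + d - (c j).totalDegree) := by
          rw [← pow_add]; congr 1; omega
        have e2 : s ^ (c j).totalDegree * s⁻¹ ^ (c j).totalDegree = 1 := by
          rw [← mul_pow, mul_inv_cancel₀ h0, one_pow]
        have e3 : s ^ (2 * k + d) * eval (s⁻¹ • (Fin.cons 1 x : Fin (n + 1) → ℝ))
            (gEqH c (some j) * a) = eval x (c j) * (s ^ (2 * k + d - (c j).totalDegree) *
              eval (s⁻¹ • (Fin.cons 1 x : Fin (n + 1) → ℝ)) a) := by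
          rw [map_mul, show gEqH c (some j) = homogenize (c j) from rfl, hh, e1]
          linear_combination (eval x (c j) * (s ^ (2 * k + d - (c j).totalDegree) *
              eval (s⁻¹ • (Fin.cons 1 x : Fin (n + 1) → ℝ)) a)) * e2
        rw [e3, hAB x s hs h0]
        simp only [map_add, map_mul, map_zero, add_zero]
        ring
  | zero =>
    exact ⟨Kb, fun k hk => ⟨0, Ideal_zero (hKE k hk), 0,
      QMod_sos (hKI2 k hk) IsSOS_zero (by simp), 0, by simp⟩⟩
  | add p q _ _ hp hq =>
    obtain ⟨k0, hp⟩ := hp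
    obtain ⟨k1, hq⟩ := hq
    refine ⟨k0 + k1, fun k hk => ?_⟩
    obtain ⟨p1, h1, p2, h2, R, h⟩ := hp k (by omega)
    obtain ⟨q1, g1, q2, g2, R', g⟩ := hq k (by omega)
    refine ⟨p1 + q1, Ideal_add h1 g1, p2 + q2, QMod_add h2 g2, R + R', fun x s hs h0 => ?_⟩
    rw [map_add, mul_add, h x s hs h0, g x s hs h0]
    simp only [map_add]; ring

theorem IsSOS_nonneg {n : ℕ} {p : RPoly n} (hp : IsSOS p) (x : Fin n → ℝ) : 0 ≤ eval x p := by
  obtain ⟨L, rfl⟩ := hp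
  induction L with
  | nil => simp
  | cons a L ih =>
    simp only [List.map_cons, List.sum_cons, map_add, map_pow]
    exact add_nonneg (sq_nonneg _) ih

theorem final_cert {n d : ℕ} (hde : Even d) (E I : Finset ℕ) (c : ℕ → RPoly n)
    (hce : ∀ j ∈ I, Even (c j).totalDegree) (f : RPoly n) (hfd : f.totalDegree = d) (fmin : ℝ)
    (hfmin : IsGLB {v : ℝ | ∃ x ∈ Kset E I c, v = eval x f} fmin)
    (hp : homogenize f - C fmin * (X 0 : RPoly (n + 1)) ^ d ∈
      Mc (OS E) (gEqH c) I (fun j => homogenize (c j))) :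
    ∃ k0 : ℕ, ∀ k : ℕ, k0 ≤ k → DenRelaxVal E I c f d k = fmin := by
  obtain ⟨k0, hk0⟩ := dehom_cert hde E I c hce _ hp
  refine ⟨k0, fun k hk => ?_⟩
  have hθ : ∀ x : Fin n → ℝ, 1 ≤ eval x (thetaP n) := by
    intro x
    simp only [thetaP, map_add, map_one, map_sum, map_pow, eval_X]
    have : 0 ≤ ∑ i, x i ^ 2 := Finset.sum_nonneg fun i _ => sq_nonneg _
    linarith
  refine IsGreatest.csSup_eq ⟨?_, ?_⟩
  · obtain ⟨p1, h1, p2, h2, R, h⟩ := hk0 k hk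
    refine ⟨p1, h1, p2, h2, ?_⟩
    change thetaP n ^ k * (f - C fmin) = p1 + p2
    refine MvPolynomial.funext fun x => ?_
    have key : ∀ s : ℝ, s ^ 2 = eval x (thetaP n) → s ≠ 0 →
        eval x (thetaP n ^ k * (f - C fmin)) = eval x (p1 + p2) + s * eval x R := by
      intro s hs h0
      rw [← h x s hs h0, map_sub, homog_scale, homog_cons, hfd]
      simp only [map_mul, map_pow, map_sub, eval_C, eval_X, Pi.smul_apply, Fin.cons_zero,
        smul_eq_mul, mul_one, ← hs]
      have e2 : s ^ d * s⁻¹ ^ d = 1 := by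
        rw [← mul_pow, mul_inv_cancel₀ h0, one_pow]
      rw [pow_add, pow_mul]
      linear_combination (-((s ^ 2) ^ k * (eval x f - fmin))) * e2
    have hpos : 0 < eval x (thetaP n) := by linarith [hθ x]
    have hs := Real.sq_sqrt hpos.le
    have hs0 := (Real.sqrt_pos.2 hpos).ne'
    have k1 := key _ hs hs0
    have k2 := key (-Real.sqrt (eval x (thetaP n))) (by rw [neg_sq]; exact hs) (neg_ne_zero.2 hs0)
    linarith
  · rintro γ ⟨p1, ⟨q, -, rfl⟩, p2, ⟨σ0, σ, hσ0, -, hσ, rfl⟩, he⟩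
    refine hfmin.2 ?_
    rintro v ⟨x, hx, rfl⟩
    change thetaP n ^ k * (f - C γ) = _ at he
    have := congrArg (eval x) he
    simp only [map_mul, map_pow, map_sub, map_add, map_sum, eval_C] at this
    rw [Finset.sum_eq_zero (s := E) (fun j hj => by rw [hx.1 j hj, zero_mul]), zero_add] at this
    have hn : 0 ≤ eval x (thetaP n) ^ k * (eval x f - γ) := by
      rw [this]
      exact add_nonneg (IsSOS_nonneg hσ0 x) (Finset.sum_nonneg fun j hj =>
        mul_nonneg (hx.2 j hj) (IsSOS_nonneg (hσ j hj).1 x))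
    have hpos : 0 < eval x (thetaP n) ^ k := pow_pos (by linarith [hθ x]) k
    have := nonneg_of_mul_nonneg_right hn hpos
    linarith

/-- Theorem 4.6(i): finite convergence of the Moment-SOS hierarchy
with denominators, in the case of even degrees. -/
theorem statement_9
    (n d : ℕ) (E I : Finset ℕ) (hEI : Disjoint E I) (c : ℕ → RPoly n)
    (f : RPoly n) (hfd : f.totalDegree = d) (hde : Even d)
    (hce : ∀ j ∈ I, Even (c j).totalDegree)
    -- K is closed at infinity
    (hcl : ClosedAtInfinity E I c)
    -- f ∈ ℝ + int(P_d(K))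
    (hint : ∃ cst : ℝ, (f - C cst) ∈ PdInterior d (Kset E I c))
    -- f_min is the (finite) optimal value of the problem
    (fmin : ℝ) (hfmin : IsGLB {v : ℝ | ∃ x ∈ Kset E I c, v = eval x f} fmin)
    -- LICQC, SCC, SOSC at every global minimizer of (H⁰)
    (hopt : ∀ u : Fin (n + 1) → ℝ,
      ((∀ j ∈ E, eval u (homogenize (c j)) = 0) ∧
        (∀ j ∈ I, 0 ≤ eval u (homogenize (c j))) ∧ (∑ i, (u i) ^ 2) = 1 ∧
        (∀ x : Fin (n + 1) → ℝ,
          ((∀ j ∈ E, eval x (homogenize (c j)) = 0) ∧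
            (∀ j ∈ I, 0 ≤ eval x (homogenize (c j))) ∧ (∑ i, (x i) ^ 2) = 1) →
          eval u (homogenize f - C fmin * (X 0 : RPoly (n + 1)) ^ d)
            ≤ eval x (homogenize f - C fmin * (X 0 : RPoly (n + 1)) ^ d))) →
      OptCondsAt (OS E) (gEqH c) I (fun j => homogenize (c j))
        (homogenize f - C fmin * (X 0 : RPoly (n + 1)) ^ d) u) :
    ∃ k0 : ℕ, ∀ k : ℕ, k0 ≤ k → DenRelaxVal E I c f d k = fmin := by
  exact final_cert hde E I c hce f hfd fmin hfmin
    (F_mem E I c f hfd hde hce hcl fmin hfmin hopt)
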